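/- arXiv:1604.02190 — 11 statements merged into one kernel-verified Lean document; each statement's English description precedes it below -/
import Mathlib

section
/- For every integer k ≥ 1 and every α ∈ ℤ, one has k! · τ_k^{(α)} = Σ_m V.coeff(m) · ∏_{i=0}^{k−1} c_{α+m(i)}, where V ∈ ℂ[w_0,…,w_{k−1}] is the squared Vandermonde polynomial V = ∏_{0≤i<j≤k−1}(w_i − w_j)², m ranges over the (finite) support of V (monomial exponent vectors m : Fin k → ℕ), and V.coeff(m) is the coefficient of the monomial ∏_i w_i^{m(i)} in V. -/
/-- Hankel determinant tau-function: `τ_k^{(α)} = det (c_{α+i+j})_{0 ≤ i,j ≤ k-1}`,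
with `τ_0^{(α)} = 1` (empty determinant) and `τ_k^{(α)} = 0` for `k < 0`. -/
noncomputable def tau (c : ℤ → ℂ) (k α : ℤ) : ℂ :=
  if k < 0 then 0
  else Matrix.det (Matrix.of fun i j : Fin k.toNat => c (α + (i : ℕ) + (j : ℕ)))

/-- The squared Vandermonde polynomial `V = ∏_{0 ≤ i < j ≤ k-1} (w_i - w_j)^2`. -/
noncomputable def vandermondeSq (k : ℕ) : MvPolynomial (Fin k) ℂ :=
  ∏ p ∈ (Finset.univ : Finset (Fin k × Fin k)).filter (fun p => p.1 < p.2),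
    (MvPolynomial.X p.1 - MvPolynomial.X p.2) ^ 2

/-- The linear functional sending a monomial `w^m` to `∏ c_{α+m i}`. -/
noncomputable def momentFunctional (c : ℤ → ℂ) (k : ℕ) (α : ℤ) :
    MvPolynomial (Fin k) ℂ →ₗ[ℂ] ℂ :=
  (MvPolynomial.basisMonomials (Fin k) ℂ).constr ℂ (fun m => ∏ i : Fin k, c (α + (m i : ℤ)))

theorem momentFunctional_monomial (c : ℤ → ℂ) (k : ℕ) (α : ℤ) (m : Fin k →₀ ℕ) (a : ℂ) :
    momentFunctional c k α (MvPolynomial.monomial m a) = a * ∏ i : Fin k, c (α + (m i : ℤ)) := by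
  have h := (MvPolynomial.basisMonomials (Fin k) ℂ).constr_basis ℂ
    (fun m : Fin k →₀ ℕ => ∏ i : Fin k, c (α + (m i : ℤ))) m
  rw [MvPolynomial.coe_basisMonomials] at h
  have h2 : MvPolynomial.monomial m a = a • (MvPolynomial.monomial m (1 : ℂ)) := by
    rw [MvPolynomial.smul_monomial, smul_eq_mul, mul_one]
  rw [h2, map_smul, smul_eq_mul]
  congr 1

theorem momentFunctional_apply (c : ℤ → ℂ) (k : ℕ) (α : ℤ) (p : MvPolynomial (Fin k) ℂ) :
    momentFunctional c k α p =
      ∑ m ∈ p.support, p.coeff m * ∏ i : Fin k, c (α + (m i : ℤ)) := by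
  conv_lhs => rw [p.as_sum]
  rw [map_sum]
  simp only [momentFunctional_monomial]

theorem vandermondeSq_eq (k : ℕ) :
    vandermondeSq k = (Matrix.vandermonde (fun i : Fin k => (MvPolynomial.X i :
      MvPolynomial (Fin k) ℂ))).det ^ 2 := by
  rw [Matrix.det_vandermonde, vandermondeSq, ← Finset.prod_pow, Finset.prod_filter,
    ← Finset.univ_product_univ, Finset.prod_product]
  refine Finset.prod_congr rfl fun i _ => ?_
  rw [← Finset.prod_pow, ← Finset.prod_filter]
  refine Finset.prod_congr ?_ fun j _ => by ring
  ext j; simp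

theorem vandermondeSq_expand (k : ℕ) :
    vandermondeSq k = ∑ σ : Equiv.Perm (Fin k), ∑ ρ : Equiv.Perm (Fin k),
      MvPolynomial.monomial (Finsupp.equivFunOnFinite.symm
        (fun i => ((σ i : Fin k) : ℕ) + ((ρ i : Fin k) : ℕ)))
        (((Equiv.Perm.sign σ : ℤ) : ℂ) * ((Equiv.Perm.sign ρ : ℤ) : ℂ)) := by
  rw [vandermondeSq_eq, ← Matrix.det_transpose, Matrix.det_apply', sq, Finset.sum_mul_sum]
  refine Finset.sum_congr rfl fun σ _ => Finset.sum_congr rfl fun ρ _ => ?_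
  rw [MvPolynomial.monomial_eq, Finsupp.prod_fintype _ _ (by simp)]
  simp only [Matrix.transpose_apply, Matrix.vandermonde_apply, Finsupp.equivFunOnFinite_symm_apply_apply,
    pow_add, Finset.prod_mul_distrib, map_mul, map_intCast]
  ring

theorem residue_formula_tau (c : ℤ → ℂ) (k : ℕ) (hk : 1 ≤ k) (α : ℤ) :
    (k.factorial : ℂ) * tau c k α =
      ∑ m ∈ (vandermondeSq k).support,
        (vandermondeSq k).coeff m * ∏ i : Fin k, c (α + (m i : ℤ)) := by
  rw [← momentFunctional_apply, vandermondeSq_expand, map_sum]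
  have htau : tau c k α =
      Matrix.det (Matrix.of fun i j : Fin k => c (α + (i : ℕ) + (j : ℕ))) := by
    unfold tau
    rw [if_neg (by omega)]
    rfl
  rw [htau]
  set H := Matrix.of fun i j : Fin k => c (α + (i : ℕ) + (j : ℕ)) with hH
  have key : ∀ σ : Equiv.Perm (Fin k), momentFunctional c k α
      (∑ ρ : Equiv.Perm (Fin k),
      MvPolynomial.monomial (Finsupp.equivFunOnFinite.symm
        (fun i => ((σ i : Fin k) : ℕ) + ((ρ i : Fin k) : ℕ)))
        (((Equiv.Perm.sign σ : ℤ) : ℂ) * ((Equiv.Perm.sign ρ : ℤ) : ℂ))) = H.det := by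
    intro σ
    have h1 : (((Equiv.Perm.sign σ : ℤ) : ℂ)) * (H.submatrix σ id).det = H.det := by
      rw [Matrix.det_permute, ← mul_assoc, ← Int.cast_mul, ← Units.val_mul, Int.units_mul_self]
      simp
    rw [← h1, ← Matrix.det_transpose, Matrix.det_apply', map_sum, Finset.mul_sum]
    refine Finset.sum_congr rfl fun ρ _ => ?_
    rw [momentFunctional_monomial, mul_assoc]
    simp [hH, add_assoc]
  rw [Finset.sum_congr rfl fun σ _ => key σ]
  simp [Fintype.card_perm]
end

section
/- For every integer k ≥ 1 and every α ∈ ℤ, the polynomial identity k! · P_k^{(α)}(z) = Σ_m q_m(z) · ∏_{i=0}^{k−1} c_{α+m(i)} holds in ℂ[z], where q_m(z) ∈ ℂ[z] is the coefficient of the monomial ∏_i w_i^{m(i)} in the polynomial ∏_{0≤i<j≤k−1}(w_i − w_j)² · ∏_{i=0}^{k−1}(z − w_i) (regarded as a polynomial in w_0,…,w_{k−1} with coefficients in ℂ[z]), and the sum ranges over all exponent vectors m : Fin k → ℕ with q_m ≠ 0. -/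
/-- The determinantal polynomial `P_k^{(α)}(z)`: determinant of the `(k+1) × (k+1)` matrix
whose `(i,j)` entry is `c_{α+i+j}` for `0 ≤ j ≤ k-1` and `z^i` for `j = k`. -/
noncomputable def Pdet (c : ℤ → ℂ) (k : ℕ) (α : ℤ) : Polynomial ℂ :=
  Matrix.det (Matrix.of fun i j : Fin (k + 1) =>
    if (j : ℕ) < k then Polynomial.C (c (α + (i : ℕ) + (j : ℕ))) else Polynomial.X ^ (i : ℕ))

/-- The polynomial `∏_{0 ≤ i < j ≤ k-1}(w_i - w_j)^2 ⬝ ∏_{i=0}^{k-1}(z - w_i)`, regarded as a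
polynomial in `w_0, …, w_{k-1}` with coefficients in `ℂ[z]`. -/
noncomputable def vandermondeSqShift (k : ℕ) : MvPolynomial (Fin k) (Polynomial ℂ) :=
  (∏ p ∈ (Finset.univ : Finset (Fin k × Fin k)).filter (fun p => p.1 < p.2),
      (MvPolynomial.X p.1 - MvPolynomial.X p.2) ^ 2) *
    ∏ i : Fin k, (MvPolynomial.C Polynomial.X - MvPolynomial.X i)

lemma vdm_prod {R : Type*} [CommRing R] {n : ℕ} (v : Fin n → R) :
    (Matrix.vandermonde v).det = ∏ i, ∏ j, if i < j then (v j - v i) else 1 := by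
  rw [Matrix.det_vandermonde]
  refine Finset.prod_congr rfl fun i _ => ?_
  rw [← Finset.prod_filter]
  refine Finset.prod_congr ?_ fun _ _ => rfl
  ext j; simp

lemma vss_eq (k : ℕ) : vandermondeSqShift k =
    (Matrix.vandermonde (fun i : Fin k =>
      (MvPolynomial.X i : MvPolynomial (Fin k) (Polynomial ℂ)))).det *
    (Matrix.vandermonde (Fin.snoc (α := fun _ => MvPolynomial (Fin k) (Polynomial ℂ))
      (fun i : Fin k => MvPolynomial.X i) (MvPolynomial.C Polynomial.X))).det := by
  rw [vdm_prod, vdm_prod, Fin.prod_univ_castSucc]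
  simp only [Fin.prod_univ_castSucc (n := k)]
  have h0 : ∀ i : Fin k, ¬ (Fin.last k < i.castSucc) := fun i => not_lt.2 (Fin.le_last _)
  simp only [Fin.snoc_castSucc, Fin.snoc_last, Fin.castSucc_lt_castSucc_iff, Fin.castSucc_lt_last,
    if_true, h0, if_false, Finset.prod_const_one, lt_irrefl, mul_one, Finset.prod_mul_distrib]
  rw [← mul_assoc, vandermondeSqShift]
  congr 1
  rw [Finset.prod_filter, ← Finset.univ_product_univ, Finset.prod_product,
    ← Finset.prod_mul_distrib]
  refine Finset.prod_congr rfl fun i _ => ?_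
  rw [← Finset.prod_mul_distrib]
  refine Finset.prod_congr rfl fun j _ => ?_
  split_ifs
  · ring
  · simp

/-- The linear functional sending `w^m` to `∏ c (α + m i)`. -/
noncomputable def momentL (c : ℤ → ℂ) (k : ℕ) (α : ℤ) :
    MvPolynomial (Fin k) (Polynomial ℂ) →ₗ[Polynomial ℂ] Polynomial ℂ :=
  Finsupp.linearCombination (Polynomial ℂ)
      (fun m : Fin k →₀ ℕ => Polynomial.C (∏ i : Fin k, c (α + (m i : ℤ)))) ∘ₗ
    (MvPolynomial.basisMonomials (Fin k) (Polynomial ℂ)).repr.toLinearMap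

lemma momentL_apply (c : ℤ → ℂ) (k : ℕ) (α : ℤ) (p : MvPolynomial (Fin k) (Polynomial ℂ)) :
    momentL c k α p = ∑ m ∈ p.support,
      p.coeff m * Polynomial.C (∏ i : Fin k, c (α + (m i : ℤ))) := by
  rfl

lemma momentL_monomial (c : ℤ → ℂ) (k : ℕ) (α : ℤ) (m : Fin k → ℕ) (a : Polynomial ℂ) :
    momentL c k α (MvPolynomial.C a * ∏ i, MvPolynomial.X i ^ m i) =
      a * Polynomial.C (∏ i : Fin k, c (α + (m i : ℤ))) := by
  have h : (MvPolynomial.C a * ∏ i, MvPolynomial.X i ^ m i : MvPolynomial (Fin k) (Polynomial ℂ))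
      = MvPolynomial.monomial (Finsupp.equivFunOnFinite.symm m) a := by
    rw [MvPolynomial.monomial_eq, Finsupp.prod_fintype _ _ (by simp)]
    simp
  rw [h, momentL_apply]
  by_cases ha : a = 0
  · simp [ha]
  · classical
    rw [MvPolynomial.support_monomial, if_neg ha]
    simp

lemma inner_det (c : ℤ → ℂ) (k : ℕ) (α : ℤ) (σ : Equiv.Perm (Fin k)) :
    ∑ τ : Equiv.Perm (Fin (k + 1)), ((Equiv.Perm.sign τ : ℤ) : Polynomial ℂ) *
      (Polynomial.X ^ (τ (Fin.last k) : ℕ) *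
        Polynomial.C (∏ i : Fin k, c (α + (((σ i : ℕ) + (τ i.castSucc : ℕ) : ℕ) : ℤ)))) =
      ((Equiv.Perm.sign σ : ℤ) : Polynomial ℂ) * Pdet c k α := by
  set σ' : Equiv.Perm (Fin (k + 1)) := finSuccEquivLast.symm.permCongr (Equiv.optionCongr σ)
    with hσ'
  have hs : Equiv.Perm.sign σ' = Equiv.Perm.sign σ := by
    rw [hσ', Equiv.Perm.sign_permCongr, Equiv.optionCongr_sign]
  have h1 : ∀ i : Fin k, σ' i.castSucc = (σ i).castSucc := by
    intro i; simp [hσ', Equiv.permCongr_apply]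
  have h2 : σ' (Fin.last k) = Fin.last k := by
    simp [hσ', Equiv.permCongr_apply]
  rw [← hs, Pdet, ← Matrix.det_permute', Matrix.det_apply']
  refine Finset.sum_congr rfl fun τ _ => ?_
  congr 1
  rw [Fin.prod_univ_castSucc, mul_comm, map_prod]
  congr 1
  · refine Finset.prod_congr rfl fun i _ => ?_
    simp only [Matrix.submatrix_apply, Matrix.of_apply, id, h1, Fin.val_castSucc, Fin.is_lt, if_true]
    congr 2
    push_cast
    ring
  · simp [h2]

theorem residue_formula_P (c : ℤ → ℂ) (k : ℕ) (hk : 1 ≤ k) (α : ℤ) :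
    Polynomial.C (k.factorial : ℂ) * Pdet c k α =
      ∑ m ∈ (vandermondeSqShift k).support,
        (vandermondeSqShift k).coeff m * Polynomial.C (∏ i : Fin k, c (α + (m i : ℤ))) := by
  rw [← momentL_apply, vss_eq, ← Matrix.det_transpose, Matrix.det_apply',
    ← Matrix.det_transpose (Matrix.vandermonde (Fin.snoc _ _)), Matrix.det_apply',
    Finset.sum_mul_sum, map_sum]
  have key : ∀ σ : Equiv.Perm (Fin k), ∀ τ : Equiv.Perm (Fin (k + 1)),
      momentL c k α ((((Equiv.Perm.sign σ : ℤ) : MvPolynomial (Fin k) (Polynomial ℂ)) *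
        ∏ i, (Matrix.vandermonde (fun i : Fin k =>
          (MvPolynomial.X i : MvPolynomial (Fin k) (Polynomial ℂ)))).transpose (σ i) i) *
        (((Equiv.Perm.sign τ : ℤ) : MvPolynomial (Fin k) (Polynomial ℂ)) *
        ∏ i, (Matrix.vandermonde (Fin.snoc (α := fun _ => MvPolynomial (Fin k) (Polynomial ℂ))
          (fun i : Fin k => MvPolynomial.X i) (MvPolynomial.C Polynomial.X))).transpose (τ i) i)) =
      ((Equiv.Perm.sign σ : ℤ) : Polynomial ℂ) * (((Equiv.Perm.sign τ : ℤ) : Polynomial ℂ) *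
      (Polynomial.X ^ (τ (Fin.last k) : ℕ) *
        Polynomial.C (∏ i : Fin k, c (α + (((σ i : ℕ) + (τ i.castSucc : ℕ) : ℕ) : ℤ))))) := by
    intro σ τ
    have := momentL_monomial c k α (fun i => (σ i : ℕ) + (τ i.castSucc : ℕ))
      (((Equiv.Perm.sign σ : ℤ) : Polynomial ℂ) * (((Equiv.Perm.sign τ : ℤ) : Polynomial ℂ) *
      (Polynomial.X ^ (τ (Fin.last k) : ℕ))))
    simp only [mul_assoc] at this ⊢
    rw [← this]
    refine congrArg (momentL c k α) ?_
    rw [Fin.prod_univ_castSucc]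
    simp only [Matrix.transpose_apply, Matrix.vandermonde_apply, Fin.snoc_castSucc, Fin.snoc_last,
      pow_add, Finset.prod_mul_distrib, map_mul, map_pow, map_intCast]
    ring
  simp only [map_sum, key]
  simp only [← Finset.mul_sum, inner_det]
  have hsq : ∀ σ : Equiv.Perm (Fin k), ((Equiv.Perm.sign σ : ℤ) : Polynomial ℂ) *
      (((Equiv.Perm.sign σ : ℤ) : Polynomial ℂ) * Pdet c k α) = Pdet c k α := by
    intro σ
    rw [← mul_assoc, ← Int.cast_mul, ← Units.val_mul, Int.units_mul_self]
    simp
  simp only [hsq]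
  simp [Fintype.card_perm]
end

section
/- For every integer k ≥ 1 and every α ∈ ℤ, the Hankel determinants satisfy the zero-curvature identity (τ_k^{(α)})² · (τ_{k+2}^{(α−1)} τ_k^{(α+1)} − τ_{k+1}^{(α−1)} τ_{k+1}^{(α+1)}) = (τ_{k+1}^{(α)})² · (τ_{k+1}^{(α−1)} τ_{k−1}^{(α+1)} − τ_k^{(α−1)} τ_k^{(α+1)}). -/
open Matrix in
theorem dj_block {R : Type*} [CommRing R] [IsDomain R] {m : Type*} [Fintype m] [DecidableEq m]
    (P : Matrix (m ⊕ Fin 2) (m ⊕ Fin 2) R) (hP : P.det ≠ 0) :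
    P.toBlocks₁₁.det * P.det = P.adjugate.toBlocks₂₂.det := by
  have h := mul_adjugate P
  rw [← fromBlocks_toBlocks P.adjugate] at h
  nth_rewrite 1 [← fromBlocks_toBlocks P] at h
  rw [fromBlocks_multiply, ← fromBlocks_one, fromBlocks_smul, fromBlocks_inj] at h
  obtain ⟨-, h12, -, h22⟩ := h
  have key : P * fromBlocks 1 P.adjugate.toBlocks₁₂ 0 P.adjugate.toBlocks₂₂ =
      fromBlocks P.toBlocks₁₁ 0 P.toBlocks₂₁ (P.det • 1) := by
    nth_rewrite 1 [← fromBlocks_toBlocks P]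
    rw [fromBlocks_multiply, h12, h22]
    simp
  have h2 := congrArg det key
  rw [det_mul, det_fromBlocks_zero₂₁, det_fromBlocks_zero₁₂, det_one, det_smul] at h2
  simp only [Fintype.card_fin, det_one, one_mul, mul_one] at h2
  apply mul_left_cancel₀ hP
  rw [h2]; ring

def djFun (n : ℕ) : Fin n ⊕ Fin 2 → Fin (n + 2) :=
  Sum.elim (fun i => i.succ.castSucc) ![0, Fin.last (n + 1)]

theorem djFun_bij (n : ℕ) : Function.Bijective (djFun n) := by
  rw [Fintype.bijective_iff_injective_and_card]
  refine ⟨?_, by simp⟩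
  rintro (i | i) (j | j) h
  · simp only [djFun, Sum.elim_inl, Fin.ext_iff, Fin.val_castSucc, Fin.val_succ] at h
    exact congrArg Sum.inl (Fin.ext (by omega))
  · exfalso
    have := i.isLt
    fin_cases j <;> simp [djFun, Fin.ext_iff] at h
    omega
  · exfalso
    have := j.isLt
    fin_cases i <;> simp [djFun, Fin.ext_iff] at h
    omega
  · fin_cases i <;> fin_cases j <;> simp [djFun, Fin.ext_iff] at h ⊢

open Matrix in
theorem dj_domain {R : Type*} [CommRing R] [IsDomain R] (n : ℕ)
    (M : Matrix (Fin (n + 2)) (Fin (n + 2)) R) (hM : M.det ≠ 0) :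
    M.det * (M.submatrix (fun i : Fin n => i.succ.castSucc) (fun i => i.succ.castSucc)).det =
      (M.submatrix Fin.succ Fin.succ).det * (M.submatrix Fin.castSucc Fin.castSucc).det -
      (M.submatrix Fin.succ Fin.castSucc).det * (M.submatrix Fin.castSucc Fin.succ).det := by
  let e : Fin n ⊕ Fin 2 ≃ Fin (n + 2) := Equiv.ofBijective _ (djFun_bij n)
  have hd : (M.submatrix e e).det = M.det := det_submatrix_equiv_self e M
  have h := dj_block (M.submatrix e e) (by rwa [hd])
  rw [hd, adjugate_submatrix_equiv_self, det_fin_two] at h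
  have e0 : e (Sum.inr 0) = 0 := rfl
  have e1 : e (Sum.inr 1) = Fin.last (n + 1) := rfl
  simp only [toBlocks₂₂, of_apply, submatrix_apply, e0, e1,
    adjugate_fin_succ_eq_det_submatrix, Fin.succAbove_zero, Fin.succAbove_last] at h
  have e3 : (M.submatrix e e).toBlocks₁₁ =
    M.submatrix (fun i : Fin n => i.succ.castSucc) (fun i => i.succ.castSucc) := rfl
  rw [e3] at h
  have s1 : ((-1 : R) ^ (n + 1)) * (-1) ^ (n + 1) = 1 := by
    rw [← mul_pow]; simp
  simp only [Fin.val_zero, Fin.val_last, add_zero, zero_add, pow_zero, one_mul, pow_add _ (n+1) (n+1), s1] at h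
  linear_combination h - (M.submatrix Fin.succ Fin.castSucc).det * (M.submatrix Fin.castSucc Fin.succ).det * s1

open Matrix in
theorem dj_complex (n : ℕ) (M : Matrix (Fin (n + 2)) (Fin (n + 2)) ℂ) :
    M.det * (M.submatrix (fun i : Fin n => i.succ.castSucc) (fun i => i.succ.castSucc)).det =
      (M.submatrix Fin.succ Fin.succ).det * (M.submatrix Fin.castSucc Fin.castSucc).det -
      (M.submatrix Fin.succ Fin.castSucc).det * (M.submatrix Fin.castSucc Fin.succ).det := by
  have h := dj_domain n (mvPolynomialX (Fin (n+2)) (Fin (n+2)) ℂ) (det_mvPolynomialX_ne_zero _ _)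
  have h2 := congrArg (MvPolynomial.eval fun p : Fin (n+2) × Fin (n+2) => M p.1 p.2) h
  simp only [map_mul, map_sub, RingHom.map_det, RingHom.mapMatrix_apply, ← submatrix_map] at h2
  have hm : (mvPolynomialX (Fin (n+2)) (Fin (n+2)) ℂ).map
      (MvPolynomial.eval fun p : Fin (n+2) × Fin (n+2) => M p.1 p.2) = M := by
    ext i j
    simp [mvPolynomialX]
  rw [hm] at h2
  exact h2

theorem tau_nat (c : ℤ → ℂ) (n : ℕ) (α : ℤ) :
    tau c n α = Matrix.det (Matrix.of fun i j : Fin n => c (α + (i : ℕ) + (j : ℕ))) := by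
  simp only [tau]
  rw [if_neg (by omega)]
  rfl

theorem tau_dj (c : ℤ → ℂ) (n : ℕ) (α : ℤ) :
    tau c ((n + 2 : ℕ) : ℤ) (α - 1) * tau c (n : ℤ) (α + 1) =
      tau c ((n + 1 : ℕ) : ℤ) (α - 1) * tau c ((n + 1 : ℕ) : ℤ) (α + 1) -
      tau c ((n + 1 : ℕ) : ℤ) α ^ 2 := by
  simp only [tau_nat]
  have h := dj_complex n (Matrix.of fun i j : Fin (n + 2) => c (α - 1 + (i : ℕ) + (j : ℕ)))
  have a1 : ∀ i j : ℕ, α - 1 + ((i + 1 : ℕ) : ℤ) + ((j + 1 : ℕ) : ℤ) = α + 1 + i + j := by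
    intros; push_cast; ring
  have a2 : ∀ i j : ℕ, α - 1 + ((i + 1 : ℕ) : ℤ) + (j : ℤ) = α + i + j := by
    intros; push_cast; ring
  have a3 : ∀ i j : ℕ, α - 1 + (i : ℤ) + ((j + 1 : ℕ) : ℤ) = α + i + j := by
    intros; push_cast; ring
  simp only [Matrix.submatrix, Matrix.of_apply, Fin.val_succ, Fin.val_castSucc, a1, a2, a3] at h
  rw [h]; ring

theorem zero_curvature_identity (c : ℤ → ℂ) (k : ℤ) (hk : 1 ≤ k) (α : ℤ) :
    (tau c k α) ^ 2 *
        (tau c (k + 2) (α - 1) * tau c k (α + 1) -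
          tau c (k + 1) (α - 1) * tau c (k + 1) (α + 1)) =
      (tau c (k + 1) α) ^ 2 *
        (tau c (k + 1) (α - 1) * tau c (k - 1) (α + 1) -
          tau c k (α - 1) * tau c k (α + 1)) := by
  obtain ⟨n, rfl⟩ : ∃ n : ℕ, k = n + 1 := ⟨(k - 1).toNat, by omega⟩
  have h1 := tau_dj c n α
  have h2 := tau_dj c (n + 1) α
  push_cast at h1 h2
  have b1 : (n : ℤ) + 1 + 1 = n + 2 := by ring
  have b2 : (n : ℤ) + 1 - 1 = n := by ring
  rw [b1] at h2 ⊢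
  rw [b2, h1, h2]
  ring
end

section
/- Let t : ℤ → ℤ → ℂ (written t_k^{(α)}) be any family satisfying: t_k^{(α)} = 0 for k < 0; t_0^{(α)} = 1 for all α; t_k^{(α)} ≠ 0 for all k ≥ 0 and all α; and the identity (t_k^{(α)})² · (t_{k+2}^{(α−1)} t_k^{(α+1)} − t_{k+1}^{(α−1)} t_{k+1}^{(α+1)}) = (t_{k+1}^{(α)})² · (t_{k+1}^{(α−1)} t_{k−1}^{(α+1)} − t_k^{(α−1)} t_k^{(α+1)}) for all k ≥ 0 and all α ∈ ℤ. Then for all k ≥ 0 and all α ∈ ℤ, the Q-system relation t_{k+1}^{(α−1)} t_{k−1}^{(α+1)} = t_k^{(α+1)} t_k^{(α−1)} − (t_k^{(α)})² holds. -/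
theorem qsystem_from_zero_curvature (t : ℤ → ℤ → ℂ)
    (h0 : ∀ k : ℤ, k < 0 → ∀ α : ℤ, t k α = 0)
    (h1 : ∀ α : ℤ, t 0 α = 1)
    (hne : ∀ k : ℤ, 0 ≤ k → ∀ α : ℤ, t k α ≠ 0)
    (hzc : ∀ k : ℤ, 0 ≤ k → ∀ α : ℤ,
      (t k α) ^ 2 * (t (k + 2) (α - 1) * t k (α + 1) - t (k + 1) (α - 1) * t (k + 1) (α + 1)) =
        (t (k + 1) α) ^ 2 *
          (t (k + 1) (α - 1) * t (k - 1) (α + 1) - t k (α - 1) * t k (α + 1))) :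
    ∀ k : ℤ, 0 ≤ k → ∀ α : ℤ,
      t (k + 1) (α - 1) * t (k - 1) (α + 1) = t k (α + 1) * t k (α - 1) - (t k α) ^ 2 := by
  intro k hk α
  induction k, hk using Int.le_induction with
  | base =>
    have := h0 (0 - 1) (by norm_num) (α + 1)
    rw [this]
    simp [h1]
  | succ k hk ih =>
    have h := hzc k hk α
    have hn := pow_ne_zero 2 (hne k hk α)
    have e1 : k + 1 + 1 = k + 2 := by ring
    have e2 : k + 1 - 1 = k := by ring
    rw [e1, e2]
    apply mul_left_cancel₀ hn
    linear_combination h + (t (k + 1) α) ^ 2 * ih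
end

section
/- For all integers k ≥ ℓ ≥ 0, all α, β ∈ ℤ, and every integer n with 0 ≤ n < k−ℓ, one has ⟨P_{k,ℓ}^{(α,β)}(z), z^n⟩_C = 0, where ⟨f,g⟩_C = Σ_{i≥0} c_{α−β+i} · (coefficient of z^i in f·g). That is, P_{k,ℓ}^{(α,β)} satisfies the first family of orthogonality conditions of a type II multiple orthogonal polynomial. -/
/-- The `ĜL₃` determinantal polynomial `P_{k,ℓ}^{(α,β)}(z)`: `(−1)^{ℓ(ℓ+1)/2}` times the
determinant of the `(k+1) × (k+1)` matrix whose `(i,j)` entry is `d_{α+i+j}` for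
`0 ≤ j ≤ ℓ-1`, `c_{α−β+i+j−ℓ}` for `ℓ ≤ j ≤ k-1`, and `z^i` for `j = k`. -/
noncomputable def P3 (c d : ℤ → ℂ) (k ℓ : ℕ) (α β : ℤ) : Polynomial ℂ :=
  (-1 : Polynomial ℂ) ^ (ℓ * (ℓ + 1) / 2) *
    Matrix.det (Matrix.of fun i j : Fin (k + 1) =>
      if (j : ℕ) < ℓ then Polynomial.C (d (α + (i : ℕ) + (j : ℕ)))
      else if (j : ℕ) < k then Polynomial.C (c (α - β + (i : ℕ) + (j : ℕ) - (ℓ : ℤ)))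
      else Polynomial.X ^ (i : ℕ))

/-- The moment bilinear form `⟨f,g⟩_C = Σ_{i ≥ 0} c_{α−β+i} ⬝ (coefficient of z^i in f⬝g)`,
a finite sum. -/
noncomputable def momentFormC (c : ℤ → ℂ) (α β : ℤ) (f g : Polynomial ℂ) : ℂ :=
  ∑ i ∈ (f * g).support, c (α - β + (i : ℤ)) * (f * g).coeff i

theorem P3_orthogonality_C (c d : ℤ → ℂ) (k ℓ : ℕ) (hℓk : ℓ ≤ k) (α β : ℤ)
    (n : ℕ) (hn : n < k - ℓ) :
    momentFormC c α β (P3 c d k ℓ α β) (Polynomial.X ^ n) = 0 := by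
  let L : Polynomial ℂ →ₗ[ℂ] ℂ :=
    Polynomial.lsum fun i => (c (α - β + (i : ℤ))) • LinearMap.id
  have hL : ∀ f g, momentFormC c α β f g = L (f * g) := by
    intro f g
    simp [momentFormC, L, Polynomial.lsum_apply, Polynomial.sum_def]
  let N : Matrix (Fin (k + 1)) (Fin (k + 1)) ℂ := Matrix.of fun i j =>
    if (j : ℕ) < ℓ then d (α + (i : ℕ) + (j : ℕ))
    else if (j : ℕ) < k then c (α - β + (i : ℕ) + (j : ℕ) - (ℓ : ℤ))
    else c (α - β + (i : ℕ) + n)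
  have hN : N.det = 0 := by
    refine Matrix.det_zero_of_column_eq (i := (⟨ℓ + n, by omega⟩ : Fin (k + 1)))
      (j := Fin.last k) ?_ ?_
    · intro h
      have := congrArg Fin.val h
      simp at this
      omega
    · intro i
      have h1 : ¬ (ℓ + n < ℓ) := by omega
      have h2 : ℓ + n < k := by omega
      have h3 : ¬ (k < ℓ) := by omega
      simp only [N, Matrix.of_apply, Fin.val_last, h1, h2, h3, if_true, if_false, lt_irrefl]
      congr 1
      push_cast
      ring
  rw [Matrix.det_succ_column N (Fin.last k)] at hN
  rw [hL, P3, Matrix.det_succ_column _ (Fin.last k)]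
  have hsub : ∀ i : Fin (k + 1), ((Matrix.of fun i j : Fin (k + 1) =>
      if (j : ℕ) < ℓ then Polynomial.C (d (α + (i : ℕ) + (j : ℕ)))
      else if (j : ℕ) < k then Polynomial.C (c (α - β + (i : ℕ) + (j : ℕ) - (ℓ : ℤ)))
      else Polynomial.X ^ (i : ℕ)).submatrix i.succAbove (Fin.last k).succAbove).det
      = Polynomial.C (N.submatrix i.succAbove (Fin.last k).succAbove).det := by
    intro i
    rw [RingHom.map_det]
    congr 1
    ext1 a b
    simp only [N, Matrix.submatrix_apply, Matrix.of_apply, RingHom.mapMatrix_apply,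
      Matrix.map_apply, Fin.succAbove_last, Fin.val_castSucc, b.isLt, if_true]
    split_ifs <;> rfl
  have h3 : ¬ (k < ℓ) := by omega
  simp only [hsub]
  have key : ∀ (m : ℕ) (a : ℂ), L (Polynomial.C a * Polynomial.X ^ m)
      = a * c (α - β + (m : ℤ)) := by
    intro m a
    rw [Polynomial.C_mul_X_pow_eq_monomial]
    simp [L, Polynomial.lsum_apply, Polynomial.sum_monomial_index, mul_comm]
  rw [mul_assoc, Finset.sum_mul, Finset.mul_sum, map_sum]
  rw [← mul_zero ((-1 : ℂ) ^ (ℓ * (ℓ + 1) / 2)), ← hN, Finset.mul_sum]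
  refine Finset.sum_congr rfl fun i _ => ?_
  have := key (i + n) ((-1 : ℂ) ^ (ℓ * (ℓ + 1) / 2) * ((-1) ^ ((i : ℕ) + k) *
    (N.submatrix i.succAbove (Fin.last k).succAbove).det))
  have hNi : N i (Fin.last k) = c (α - β + ((i + n : ℕ) : ℤ)) := by
    simp only [N, Matrix.of_apply, Fin.val_last, h3, if_false, lt_irrefl]
    congr 1
    push_cast
    ring
  rw [hNi]
  simp only [Matrix.of_apply, Fin.val_last, h3, if_false, lt_irrefl]
  refine Eq.trans (congrArg L ?_) (this.trans ?_)
  · simp only [map_mul, map_pow, map_neg, map_one]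
    ring
  · ring
end

section
/- For all integers k ≥ ℓ ≥ 0, all α, β ∈ ℤ, and every integer n with 0 ≤ n < ℓ, one has ⟨P_{k,ℓ}^{(α,β)}(z), z^n⟩_D = 0, where ⟨f,g⟩_D = Σ_{i≥0} d_{α+i} · (coefficient of z^i in f·g). That is, P_{k,ℓ}^{(α,β)} satisfies the second family of orthogonality conditions of a type II multiple orthogonal polynomial. -/
/-- The moment bilinear form `⟨f,g⟩_D = Σ_{i ≥ 0} d_{α+i} ⬝ (coefficient of z^i in f⬝g)`,
a finite sum. -/
noncomputable def momentFormD (d : ℤ → ℂ) (α : ℤ) (f g : Polynomial ℂ) : ℂ :=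
  ∑ i ∈ (f * g).support, d (α + (i : ℤ)) * (f * g).coeff i

/-- The moment functional as a linear map. -/
noncomputable def momL (d : ℤ → ℂ) (α : ℤ) : Polynomial ℂ →ₗ[ℂ] ℂ :=
  Polynomial.lsum fun i => (d (α + (i : ℤ))) • (LinearMap.id : ℂ →ₗ[ℂ] ℂ)

lemma momentFormD_eq (d : ℤ → ℂ) (α : ℤ) (f g : Polynomial ℂ) :
    momentFormD d α f g = momL d α (f * g) := by
  simp [momentFormD, momL, Polynomial.lsum_apply, Polynomial.sum_def]

lemma momL_C_mul_X_pow (d : ℤ → ℂ) (α : ℤ) (a : ℂ) (m : ℕ) :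
    momL d α (Polynomial.C a * Polynomial.X ^ m) = a * d (α + (m : ℤ)) := by
  rw [Polynomial.C_mul_X_pow_eq_monomial, momL, Polynomial.lsum_apply,
    Polynomial.sum_monomial_index _ _ (by simp)]
  simp [mul_comm]

/-- The scalar matrix with an arbitrary last column. -/
def scalMat (c d : ℤ → ℂ) (k ℓ : ℕ) (α β : ℤ) (v : Fin (k + 1) → ℂ) :
    Matrix (Fin (k + 1)) (Fin (k + 1)) ℂ :=
  Matrix.of fun i j : Fin (k + 1) =>
      if (j : ℕ) < ℓ then d (α + (i : ℕ) + (j : ℕ))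
      else if (j : ℕ) < k then c (α - β + (i : ℕ) + (j : ℕ) - (ℓ : ℤ))
      else v i

lemma P3_expand (c d : ℤ → ℂ) (k ℓ : ℕ) (hℓk : ℓ ≤ k) (α β : ℤ) (v : Fin (k + 1) → ℂ) :
    P3 c d k ℓ α β = ∑ i : Fin (k + 1), Polynomial.C ((-1) ^ (ℓ * (ℓ + 1) / 2) *
      ((-1) ^ ((i : ℕ) + k) * ((scalMat c d k ℓ α β v).submatrix i.succAbove
        (Fin.last k).succAbove).det)) * Polynomial.X ^ (i : ℕ) := by
  rw [P3, Matrix.det_succ_column _ (Fin.last k), Finset.mul_sum]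
  refine Finset.sum_congr rfl fun i _ => ?_
  have h : (Matrix.of fun i j : Fin (k + 1) =>
      if (j : ℕ) < ℓ then Polynomial.C (d (α + (i : ℕ) + (j : ℕ)))
      else if (j : ℕ) < k then Polynomial.C (c (α - β + (i : ℕ) + (j : ℕ) - (ℓ : ℤ)))
      else Polynomial.X ^ (i : ℕ)).submatrix i.succAbove (Fin.last k).succAbove =
      Polynomial.C.mapMatrix ((scalMat c d k ℓ α β v).submatrix i.succAbove
        (Fin.last k).succAbove) := by
    ext1 a b
    have hb : (b : ℕ) < k := b.2
    simp only [Matrix.submatrix_apply, Matrix.of_apply, RingHom.mapMatrix_apply,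
      Matrix.map_apply, scalMat, Fin.succAbove_last, Fin.val_castSucc, hb, if_true]
    split_ifs <;> rfl
  rw [h, ← RingHom.map_det]
  have h2 : ¬ k < ℓ := by omega
  simp only [Matrix.of_apply, Fin.val_last, h2, lt_irrefl, if_false, map_mul, map_pow, map_neg,
    map_one]
  ring

theorem P3_orthogonality_D (c d : ℤ → ℂ) (k ℓ : ℕ) (hℓk : ℓ ≤ k) (α β : ℤ)
    (n : ℕ) (hn : n < ℓ) :
    momentFormD d α (P3 c d k ℓ α β) (Polynomial.X ^ n) = 0 := by
  set v : Fin (k + 1) → ℂ := fun i => d (α + (i : ℕ) + (n : ℕ)) with hv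
  have h2 : ¬ k < ℓ := by omega
  have hdet : (scalMat c d k ℓ α β v).det = 0 := by
    have hne : (⟨n, by omega⟩ : Fin (k + 1)) ≠ Fin.last k := by
      intro h
      have := congrArg Fin.val h
      simp at this
      omega
    refine Matrix.det_zero_of_column_eq hne fun i => ?_
    simp [scalMat, hn, h2, hv]
  rw [Matrix.det_succ_column _ (Fin.last k)] at hdet
  rw [momentFormD_eq, P3_expand c d k ℓ hℓk α β v, Finset.sum_mul, map_sum]
  simp only [mul_assoc (Polynomial.C _), ← pow_add, momL_C_mul_X_pow]
  rw [← mul_zero ((-1 : ℂ) ^ (ℓ * (ℓ + 1) / 2)), ← hdet, Finset.mul_sum]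
  refine Finset.sum_congr rfl fun i _ => ?_
  have h3 : scalMat c d k ℓ α β v i (Fin.last k) = d (α + ((i + n : ℕ) : ℤ)) := by
    simp [scalMat, h2, hv, add_assoc]
  rw [h3, Fin.val_last]
  ring
end

section
/- For all integers k ≥ ℓ ≥ 0 and all α, β ∈ ℤ, one has (k−ℓ)! · ℓ! · τ_{k,ℓ}^{(α,β)} = (−1)^{ℓ(ℓ+1)/2} Σ_{(m,n)} p.coeff(m,n) · ∏_{i=0}^{k−ℓ−1} c_{α−β+m(i)} · ∏_{j=0}^{ℓ−1} d_{α+n(j)}, where p ∈ ℂ[x_0,…,x_{k−ℓ−1}, y_0,…,y_{ℓ−1}] is the polynomial p = ∏_{0≤i<i'≤k−ℓ−1}(x_i − x_{i'})² · ∏_{0≤j<j'≤ℓ−1}(y_j − y_{j'})² · ∏_{i=0}^{k−ℓ−1} ∏_{j=0}^{ℓ−1}(x_i − y_j), the sum ranges over the (finite) support of p (pairs of exponent vectors m : Fin (k−ℓ) → ℕ, n : Fin ℓ → ℕ), and p.coeff(m,n) is the coefficient of the monomial ∏_i x_i^{m(i)} ∏_j y_j^{n(j)} in p. -/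
/-- The `ĜL₃` tau-function (with `E(z) = 0`): `(−1)^{ℓ(ℓ+1)/2}` times the determinant of the
`k × k` matrix whose `(i,j)` entry is `d_{α+i+j}` for `0 ≤ j ≤ ℓ-1` and `c_{α−β+i+j−ℓ}` for
`ℓ ≤ j ≤ k-1`. -/
noncomputable def tau3 (c d : ℤ → ℂ) (k ℓ : ℕ) (α β : ℤ) : ℂ :=
  (-1 : ℂ) ^ (ℓ * (ℓ + 1) / 2) *
    Matrix.det (Matrix.of fun i j : Fin k =>
      if (j : ℕ) < ℓ then d (α + (i : ℕ) + (j : ℕ))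
      else c (α - β + (i : ℕ) + (j : ℕ) - (ℓ : ℤ)))

/-- The polynomial
`p = ∏_{i<i'}(x_i − x_{i'})² ⬝ ∏_{j<j'}(y_j − y_{j'})² ⬝ ∏_{i,j}(x_i − y_j)` in the variables
`x_0, …, x_{k-ℓ-1}` (indexed by `Sum.inl`) and `y_0, …, y_{ℓ-1}` (indexed by `Sum.inr`). -/
noncomputable def pKernel (k ℓ : ℕ) : MvPolynomial (Fin (k - ℓ) ⊕ Fin ℓ) ℂ :=
  (∏ p ∈ (Finset.univ : Finset (Fin (k - ℓ) × Fin (k - ℓ))).filter (fun p => p.1 < p.2),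
      (MvPolynomial.X (Sum.inl p.1) - MvPolynomial.X (Sum.inl p.2)) ^ 2) *
    (∏ p ∈ (Finset.univ : Finset (Fin ℓ × Fin ℓ)).filter (fun p => p.1 < p.2),
      (MvPolynomial.X (Sum.inr p.1) - MvPolynomial.X (Sum.inr p.2)) ^ 2) *
    ∏ i : Fin (k - ℓ), ∏ j : Fin ℓ,
      (MvPolynomial.X (Sum.inl i) - MvPolynomial.X (Sum.inr j))

open MvPolynomial in
/-- The linear functional sending `∏ X_t^{m t}` to `∏ f t (m t)`. -/
noncomputable def resL {σ : Type} [Fintype σ] (f : σ → ℕ → ℂ) : MvPolynomial σ ℂ →ₗ[ℂ] ℂ :=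
  (MvPolynomial.basisMonomials σ ℂ).constr ℂ (fun m => ∏ t, f t (m t))

lemma resL_monomial {σ : Type} [Fintype σ] (f : σ → ℕ → ℂ) (m : σ →₀ ℕ) (a : ℂ) :
    resL f (MvPolynomial.monomial m a) = a * ∏ t, f t (m t) := by
  have h : MvPolynomial.monomial m a = a • (MvPolynomial.basisMonomials σ ℂ m) := by
    simp [MvPolynomial.smul_monomial]
  rw [h, map_smul, resL, Module.Basis.constr_basis, smul_eq_mul]

lemma resL_eq_sum {σ : Type} [Fintype σ] (f : σ → ℕ → ℂ) (p : MvPolynomial σ ℂ) :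
    resL f p = ∑ m ∈ p.support, p.coeff m * ∏ t, f t (m t) := by
  conv_lhs => rw [p.as_sum]
  rw [map_sum]
  simp only [resL_monomial]

lemma resL_prod {σ : Type} [Fintype σ] (f : σ → ℕ → ℂ) (a : σ → ℕ) :
    resL f (∏ t, (MvPolynomial.X t : MvPolynomial σ ℂ) ^ a t) = ∏ t, f t (a t) := by
  have h : (∏ t, (MvPolynomial.X t : MvPolynomial σ ℂ) ^ a t)
      = MvPolynomial.monomial (Finsupp.equivFunOnFinite.symm a) 1 := by
    rw [MvPolynomial.monomial_eq, Finsupp.prod_fintype]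
    · simp
    · simp
  rw [h, resL_monomial]
  simp

lemma resL_rename {σ : Type} [Fintype σ] (f : σ → ℕ → ℂ) (ρ : Equiv.Perm σ)
    (hf : ∀ t, f (ρ t) = f t) (p : MvPolynomial σ ℂ) :
    resL f (MvPolynomial.rename ρ p) = resL f p := by
  conv_lhs => rw [p.as_sum]
  conv_rhs => rw [p.as_sum]
  simp only [map_sum]
  refine Finset.sum_congr rfl fun m _ => ?_
  rw [MvPolynomial.rename_monomial, resL_monomial, resL_monomial, ← Equiv.prod_comp ρ]
  congr 1
  refine Finset.prod_congr rfl fun t _ => ?_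
  rw [hf, Finsupp.mapDomain_apply ρ.injective]

/-- Reindexing: first the `y` variables, then the `x` variables. -/
def resE (n ℓ : ℕ) : Fin (ℓ + n) ≃ Fin n ⊕ Fin ℓ :=
  finSumFinEquiv.symm.trans (Equiv.sumComm _ _)

lemma resE_castAdd (n ℓ : ℕ) (j : Fin ℓ) : resE n ℓ (Fin.castAdd n j) = Sum.inr j := by
  simp [resE]

lemma resE_natAdd (n ℓ : ℕ) (j : Fin n) : resE n ℓ (Fin.natAdd ℓ j) = Sum.inl j := by
  simp [resE]

/-- The offset of an index inside its block. -/
def resO (n ℓ : ℕ) : Fin n ⊕ Fin ℓ → ℕ := Sum.elim (fun i => i) (fun j => j)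

/-- The full Vandermonde determinant. -/
noncomputable def resD (n ℓ : ℕ) : MvPolynomial (Fin n ⊕ Fin ℓ) ℂ :=
  (Matrix.vandermonde (fun i => MvPolynomial.X (resE n ℓ i))).det

lemma rename_resD (n ℓ : ℕ) (ρ : Equiv.Perm (Fin n ⊕ Fin ℓ)) :
    MvPolynomial.rename ρ (resD n ℓ) = (Equiv.Perm.sign ρ : ℤ) * resD n ℓ := by
  have h : (Equiv.Perm.sign ρ) = Equiv.Perm.sign ((resE n ℓ).symm.permCongr ρ) := by simp
  rw [h, resD, ← Matrix.det_permute, AlgHom.map_det]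
  congr 1
  ext i j : 2
  simp [Matrix.vandermonde]

lemma resL_mul_resD (n ℓ : ℕ) (f : Fin n ⊕ Fin ℓ → ℕ → ℂ) :
    resL f ((∏ t, MvPolynomial.X t ^ resO n ℓ t) * resD n ℓ) =
      Matrix.det (Matrix.of fun i j : Fin (ℓ + n) =>
        f (resE n ℓ j) (i + resO n ℓ (resE n ℓ j))) := by
  rw [resD, ← Matrix.det_transpose, Matrix.det_apply', Matrix.det_apply', Finset.mul_sum, map_sum]
  refine Finset.sum_congr rfl fun π _ => ?_
  rw [← Equiv.prod_comp (resE n ℓ)]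
  rw [mul_left_comm, ← Finset.prod_mul_distrib]
  have := resL_prod f (fun t => (π ((resE n ℓ).symm t) : ℕ) + resO n ℓ t)
  rw [← Equiv.prod_comp (resE n ℓ), ← Equiv.prod_comp (resE n ℓ)] at this
  simp only [Equiv.symm_apply_apply] at this
  simp only [Matrix.of_apply, Matrix.transpose_apply, Matrix.vandermonde_apply]
  rw [← this, ← zsmul_eq_mul, map_zsmul, zsmul_eq_mul]
  simp only [pow_add, mul_comm]

lemma prod_lt_eq {R : Type} [CommRing R] (n : ℕ) (v : Fin n → R) :
    (∏ p ∈ (Finset.univ : Finset (Fin n × Fin n)).filter (fun p => p.1 < p.2),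
      (v p.1 - v p.2) ^ 2) = (Matrix.vandermonde v).det ^ 2 := by
  rw [Matrix.det_vandermonde, ← Finset.prod_pow, Finset.prod_filter, Fintype.prod_prod_type]
  refine Finset.prod_congr rfl fun i _ => ?_
  rw [← Finset.prod_pow, ← Finset.prod_filter]
  refine Finset.prod_congr (by ext; simp) fun j _ => by ring

lemma det_vandermonde_add {R : Type} [CommRing R] (n ℓ : ℕ) (v : Fin (ℓ + n) → R) :
    (Matrix.vandermonde v).det =
      (Matrix.vandermonde (fun i => v (Fin.castAdd n i))).det *
      (Matrix.vandermonde (fun i => v (Fin.natAdd ℓ i))).det *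
      ∏ i : Fin n, ∏ j : Fin ℓ, (v (Fin.natAdd ℓ i) - v (Fin.castAdd n j)) := by
  have key : ∀ (m : ℕ) (w : Fin m → R), (Matrix.vandermonde w).det =
      ∏ i, ∏ j, if i < j then w j - w i else 1 := by
    intro m w
    rw [Matrix.det_vandermonde]
    refine Finset.prod_congr rfl fun i _ => ?_
    rw [← Finset.prod_filter]
    exact Finset.prod_congr (by ext; simp) fun j _ => rfl
  have h1 : ∀ (i : Fin ℓ) (j : Fin n), Fin.castAdd n i < Fin.natAdd ℓ j := by
    intro i j; rw [Fin.lt_def]; simp only [Fin.val_castAdd, Fin.val_natAdd]; omega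
  have h2 : ∀ (i : Fin ℓ) (j : Fin n), ¬ Fin.natAdd ℓ j < Fin.castAdd n i := by
    intro i j; rw [Fin.lt_def]; simp only [Fin.val_castAdd, Fin.val_natAdd]; omega
  have h3 : ∀ (i j : Fin ℓ), Fin.castAdd n i < Fin.castAdd n j ↔ i < j := by
    intro i j; rw [Fin.lt_def]; simp
  have h4 : ∀ (i j : Fin n), Fin.natAdd ℓ i < Fin.natAdd ℓ j ↔ i < j := by
    intro i j; rw [Fin.lt_def]; simp
  rw [key, key, key, Fin.prod_univ_add]
  simp only [Fin.prod_univ_add, h1, h2, h3, h4, if_true, if_false, Finset.prod_const_one, one_mul,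
    Finset.prod_mul_distrib]
  rw [Finset.prod_comm (s := (Finset.univ : Finset (Fin n))) (t := (Finset.univ : Finset (Fin ℓ)))]
  ring

/-- `pKernel` with the two block sizes as independent parameters. -/
noncomputable def resP (n ℓ : ℕ) : MvPolynomial (Fin n ⊕ Fin ℓ) ℂ :=
  (∏ p ∈ (Finset.univ : Finset (Fin n × Fin n)).filter (fun p => p.1 < p.2),
      (MvPolynomial.X (Sum.inl p.1) - MvPolynomial.X (Sum.inl p.2)) ^ 2) *
    (∏ p ∈ (Finset.univ : Finset (Fin ℓ × Fin ℓ)).filter (fun p => p.1 < p.2),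
      (MvPolynomial.X (Sum.inr p.1) - MvPolynomial.X (Sum.inr p.2)) ^ 2) *
    ∏ i : Fin n, ∏ j : Fin ℓ,
      (MvPolynomial.X (Sum.inl i) - MvPolynomial.X (Sum.inr j))

lemma resP_eq (n ℓ : ℕ) : resP n ℓ =
    (Matrix.vandermonde (fun i : Fin n => (MvPolynomial.X (Sum.inl i) :
      MvPolynomial (Fin n ⊕ Fin ℓ) ℂ))).det *
    (Matrix.vandermonde (fun i : Fin ℓ => (MvPolynomial.X (Sum.inr i) :
      MvPolynomial (Fin n ⊕ Fin ℓ) ℂ))).det * resD n ℓ := by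
  rw [resD, det_vandermonde_add, resP,
    prod_lt_eq n (fun i => (MvPolynomial.X (Sum.inl i) : MvPolynomial (Fin n ⊕ Fin ℓ) ℂ)),
    prod_lt_eq ℓ (fun i => (MvPolynomial.X (Sum.inr i) : MvPolynomial (Fin n ⊕ Fin ℓ) ℂ))]
  simp only [resE_castAdd, resE_natAdd]
  ring

lemma resL_resP (n ℓ : ℕ) (f : Fin n ⊕ Fin ℓ → ℕ → ℂ)
    (hf : ∀ (ρ₁ : Equiv.Perm (Fin n)) (ρ₂ : Equiv.Perm (Fin ℓ)) t,
      f (Equiv.sumCongr ρ₁ ρ₂ t) = f t) :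
    resL f (resP n ℓ) = (n.factorial * ℓ.factorial : ℂ) *
      Matrix.det (Matrix.of fun i j : Fin (ℓ + n) =>
        f (resE n ℓ j) (i + resO n ℓ (resE n ℓ j))) := by
  rw [← resL_mul_resD, resP_eq, Matrix.det_apply', Matrix.det_apply', Finset.sum_mul_sum,
    Finset.sum_mul, map_sum]
  have key : ∀ (ρ₁ : Equiv.Perm (Fin n)) (ρ₂ : Equiv.Perm (Fin ℓ)),
      resL f ((((Equiv.Perm.sign ρ₁ : ℤ) : MvPolynomial (Fin n ⊕ Fin ℓ) ℂ) *
        ∏ i, Matrix.vandermonde (fun i : Fin n => (MvPolynomial.X (Sum.inl i) :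
          MvPolynomial (Fin n ⊕ Fin ℓ) ℂ)) (ρ₁ i) i) *
        (((Equiv.Perm.sign ρ₂ : ℤ) : MvPolynomial (Fin n ⊕ Fin ℓ) ℂ) *
        ∏ i, Matrix.vandermonde (fun i : Fin ℓ => (MvPolynomial.X (Sum.inr i) :
          MvPolynomial (Fin n ⊕ Fin ℓ) ℂ)) (ρ₂ i) i) * resD n ℓ) =
      resL f ((∏ t, MvPolynomial.X t ^ resO n ℓ t) * resD n ℓ) := by
    intro ρ₁ ρ₂
    rw [← resL_rename f (Equiv.sumCongr ρ₁ ρ₂) (hf ρ₁ ρ₂)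
      ((∏ t, MvPolynomial.X t ^ resO n ℓ t) * resD n ℓ), map_mul (MvPolynomial.rename _), rename_resD]
    have hs : Equiv.Perm.sign (Equiv.sumCongr ρ₁ ρ₂) = Equiv.Perm.sign ρ₁ * Equiv.Perm.sign ρ₂ :=
      Equiv.Perm.sign_sumCongr ρ₁ ρ₂
    rw [hs]
    congr 1
    simp only [Fintype.prod_sum_type, map_mul, map_prod, map_pow, MvPolynomial.rename_X, resO,
      Sum.elim_inl, Sum.elim_inr, Equiv.sumCongr_apply, Sum.map_inl, Sum.map_inr,
      Matrix.vandermonde_apply]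
    push_cast
    ring
  have key2 : ∀ ρ₁ : Equiv.Perm (Fin n), resL f ((∑ ρ₂ : Equiv.Perm (Fin ℓ),
      (((Equiv.Perm.sign ρ₁ : ℤ) : MvPolynomial (Fin n ⊕ Fin ℓ) ℂ) *
        ∏ i, Matrix.vandermonde (fun i : Fin n => (MvPolynomial.X (Sum.inl i) :
          MvPolynomial (Fin n ⊕ Fin ℓ) ℂ)) (ρ₁ i) i) *
        (((Equiv.Perm.sign ρ₂ : ℤ) : MvPolynomial (Fin n ⊕ Fin ℓ) ℂ) *
        ∏ i, Matrix.vandermonde (fun i : Fin ℓ => (MvPolynomial.X (Sum.inr i) :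
          MvPolynomial (Fin n ⊕ Fin ℓ) ℂ)) (ρ₂ i) i)) * resD n ℓ) =
      ℓ.factorial * resL f ((∏ t, MvPolynomial.X t ^ resO n ℓ t) * resD n ℓ) := by
    intro ρ₁
    rw [Finset.sum_mul, map_sum, Finset.sum_congr rfl fun ρ₂ _ => key ρ₁ ρ₂]
    simp [Fintype.card_perm]
  rw [Finset.sum_congr rfl fun ρ₁ _ => key2 ρ₁]
  simp [Fintype.card_perm, mul_assoc]

lemma tau3_aux (c d : ℤ → ℂ) (k n ℓ : ℕ) (hk : k = ℓ + n) (α β : ℤ) :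
    (n.factorial * ℓ.factorial : ℂ) * tau3 c d k ℓ α β =
      (-1 : ℂ) ^ (ℓ * (ℓ + 1) / 2) *
        ∑ m ∈ (resP n ℓ).support,
          (resP n ℓ).coeff m *
            (∏ i : Fin n, c (α - β + (m (Sum.inl i) : ℤ))) *
            (∏ j : Fin ℓ, d (α + (m (Sum.inr j) : ℤ))) := by
  subst hk
  have h := resL_resP n ℓ
    (Sum.elim (fun _ m => c (α - β + (m : ℤ))) (fun _ m => d (α + (m : ℤ))))
    (by rintro ρ₁ ρ₂ (t | t) <;> simp)
  rw [resL_eq_sum] at h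
  simp only [Fintype.prod_sum_type, Sum.elim_inl, Sum.elim_inr, ← mul_assoc] at h
  rw [h, tau3]
  rw [mul_left_comm]
  congr 3
  ext i j
  simp only [Matrix.of_apply]
  refine Fin.addCases (fun j => ?_) (fun j => ?_) j
  · simp [resE_castAdd, resO, add_assoc]
  · simp only [resE_natAdd, resO, Sum.elim_inl, Fin.val_natAdd]
    rw [if_neg (by omega)]
    congr 1
    push_cast
    ring

theorem residue_formula_tau3 (c d : ℤ → ℂ) (k ℓ : ℕ) (hℓk : ℓ ≤ k) (α β : ℤ) :
    ((k - ℓ).factorial * ℓ.factorial : ℂ) * tau3 c d k ℓ α β =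
      (-1 : ℂ) ^ (ℓ * (ℓ + 1) / 2) *
        ∑ m ∈ (pKernel k ℓ).support,
          (pKernel k ℓ).coeff m *
            (∏ i : Fin (k - ℓ), c (α - β + (m (Sum.inl i) : ℤ))) *
            (∏ j : Fin ℓ, d (α + (m (Sum.inr j) : ℤ))) := by
  exact tau3_aux c d k (k - ℓ) ℓ (by omega) α β
end

section
/- For all integers k ≥ ℓ ≥ 0 and all α, β ∈ ℤ, the polynomial identity (k−ℓ)! · ℓ! · P_{k,ℓ}^{(α,β)}(z) = (−1)^{ℓ(ℓ+1)/2} Σ_{(m,n)} q_{(m,n)}(z) · ∏_{i=0}^{k−ℓ−1} c_{α−β+m(i)} · ∏_{j=0}^{ℓ−1} d_{α+n(j)} holds in ℂ[z], where q_{(m,n)}(z) ∈ ℂ[z] is the coefficient of the monomial ∏_i x_i^{m(i)} ∏_j y_j^{n(j)} in the polynomial ∏_{0≤i<i'≤k−ℓ−1}(x_i − x_{i'})² · ∏_{0≤j<j'≤ℓ−1}(y_j − y_{j'})² · ∏_{i,j}(x_i − y_j) · ∏_{i=0}^{k−ℓ−1}(z − x_i) · ∏_{j=0}^{ℓ−1}(z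 − y_j) (regarded as a polynomial in the x's and y's with coefficients in ℂ[z]), and the sum ranges over all pairs of exponent vectors (m,n) with q_{(m,n)} ≠ 0. -/
/-- The polynomial
`∏_{i<i'}(x_i − x_{i'})² ⬝ ∏_{j<j'}(y_j − y_{j'})² ⬝ ∏_{i,j}(x_i − y_j) ⬝ ∏_i (z − x_i) ⬝
∏_j (z − y_j)` in the variables `x_0, …, x_{k-ℓ-1}` (indexed by `Sum.inl`) and
`y_0, …, y_{ℓ-1}` (indexed by `Sum.inr`), with coefficients in `ℂ[z]`. -/
noncomputable def pKernelShift (k ℓ : ℕ) : MvPolynomial (Fin (k - ℓ) ⊕ Fin ℓ) (Polynomial ℂ) :=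
  (∏ p ∈ (Finset.univ : Finset (Fin (k - ℓ) × Fin (k - ℓ))).filter (fun p => p.1 < p.2),
      (MvPolynomial.X (Sum.inl p.1) - MvPolynomial.X (Sum.inl p.2)) ^ 2) *
    (∏ p ∈ (Finset.univ : Finset (Fin ℓ × Fin ℓ)).filter (fun p => p.1 < p.2),
      (MvPolynomial.X (Sum.inr p.1) - MvPolynomial.X (Sum.inr p.2)) ^ 2) *
    (∏ i : Fin (k - ℓ), ∏ j : Fin ℓ,
      (MvPolynomial.X (Sum.inl i) - MvPolynomial.X (Sum.inr j))) *
    (∏ i : Fin (k - ℓ), (MvPolynomial.C Polynomial.X - MvPolynomial.X (Sum.inl i))) *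
    ∏ j : Fin ℓ, (MvPolynomial.C Polynomial.X - MvPolynomial.X (Sum.inr j))

namespace P3Proof

open MvPolynomial

/-- weight of an exponent vector -/
noncomputable def wt (c d : ℤ → ℂ) (n ℓ : ℕ) (a b : ℤ) (m : (Fin n ⊕ Fin ℓ) →₀ ℕ) : Polynomial ℂ :=
  Polynomial.C ((∏ i : Fin n, c (a + (m (Sum.inl i) : ℤ))) * ∏ j : Fin ℓ, d (b + (m (Sum.inr j) : ℤ)))

/-- the linear functional -/
noncomputable def L (c d : ℤ → ℂ) (n ℓ : ℕ) (a b : ℤ) :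
    MvPolynomial (Fin n ⊕ Fin ℓ) (Polynomial ℂ) →ₗ[Polynomial ℂ] Polynomial ℂ :=
  (MvPolynomial.basisMonomials (Fin n ⊕ Fin ℓ) (Polynomial ℂ)).constr (Polynomial ℂ) (wt c d n ℓ a b)

variable (c d : ℤ → ℂ) (n ℓ : ℕ) (a b : ℤ)

lemma L_monomial (m : (Fin n ⊕ Fin ℓ) →₀ ℕ) (q : Polynomial ℂ) :
    L c d n ℓ a b (monomial m q) = q * wt c d n ℓ a b m := by
  have h : monomial m q = q • (monomial m (1 : Polynomial ℂ)) := by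
    rw [smul_monomial, smul_eq_mul, mul_one]
  rw [h, map_smul, smul_eq_mul]
  congr 1
  have := (MvPolynomial.basisMonomials (Fin n ⊕ Fin ℓ) (Polynomial ℂ)).constr_basis (Polynomial ℂ)
    (wt c d n ℓ a b) m
  simpa [L] using this

lemma L_eq_sum (p : MvPolynomial (Fin n ⊕ Fin ℓ) (Polynomial ℂ)) :
    L c d n ℓ a b p = ∑ m ∈ p.support, p.coeff m * wt c d n ℓ a b m := by
  conv_lhs => rw [p.as_sum]
  rw [map_sum]
  exact Finset.sum_congr rfl fun m _ => L_monomial c d n ℓ a b m _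

lemma L_prod (e : Fin n → ℕ) (f : Fin ℓ → ℕ) (q : Polynomial ℂ) :
    L c d n ℓ a b ((∏ j, X (Sum.inr j) ^ f j) * (∏ i, X (Sum.inl i) ^ e i) * C q) =
      (∏ j, Polynomial.C (d (b + (f j : ℤ)))) * (∏ i, Polynomial.C (c (a + (e i : ℤ)))) * q := by
  have h : ((∏ j, X (Sum.inr j) ^ f j) * (∏ i, X (Sum.inl i) ^ e i) * C q :
      MvPolynomial (Fin n ⊕ Fin ℓ) (Polynomial ℂ)) =
      monomial (Finsupp.equivFunOnFinite.symm (Sum.elim e f)) q := by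
    rw [monomial_eq, Finsupp.prod_fintype _ _ (by simp), Fintype.prod_sum_type]
    simp
    ring
  rw [h, L_monomial, wt]
  simp [map_mul, map_prod]
  ring

lemma L_rename (σ : Equiv.Perm (Fin n)) (τ : Equiv.Perm (Fin ℓ))
    (p : MvPolynomial (Fin n ⊕ Fin ℓ) (Polynomial ℂ)) :
    L c d n ℓ a b (rename (Equiv.sumCongr σ τ) p) = L c d n ℓ a b p := by
  induction p using MvPolynomial.induction_on' with
  | monomial m q =>
    rw [rename_monomial, L_monomial, L_monomial]
    congr 1
    simp only [wt]
    congr 2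
    · rw [← Equiv.prod_comp σ]
      refine Finset.prod_congr rfl fun i _ => ?_
      have := Finsupp.mapDomain_apply (Equiv.sumCongr σ τ).injective m (Sum.inl i)
      simp only [Equiv.sumCongr_apply, Sum.map_inl] at this ⊢
      rw [this]
    · rw [← Equiv.prod_comp τ]
      refine Finset.prod_congr rfl fun i _ => ?_
      have := Finsupp.mapDomain_apply (Equiv.sumCongr σ τ).injective m (Sum.inr i)
      simp only [Equiv.sumCongr_apply, Sum.map_inr] at this ⊢
      rw [this]
  | add p q hp hq => simp only [map_add, hp, hq]

/-- abbreviation for the polynomial ring -/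
abbrev M (n ℓ : ℕ) := MvPolynomial (Fin n ⊕ Fin ℓ) (Polynomial ℂ)

/-- x Vandermonde -/
noncomputable def Vx : M n ℓ := (Matrix.vandermonde fun i : Fin n => (X (Sum.inl i) : M n ℓ)).det
/-- y Vandermonde -/
noncomputable def Vy : M n ℓ := (Matrix.vandermonde fun i : Fin ℓ => (X (Sum.inr i) : M n ℓ)).det
/-- symmetric part -/
noncomputable def S : M n ℓ :=
  (∏ i : Fin n, ∏ j : Fin ℓ, (X (Sum.inl i) - X (Sum.inr j))) *
    (∏ i : Fin n, (C Polynomial.X - X (Sum.inl i))) *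
    ∏ j : Fin ℓ, (C Polynomial.X - X (Sum.inr j))

lemma rename_Vx (σ : Equiv.Perm (Fin n)) (τ : Equiv.Perm (Fin ℓ)) :
    rename (Equiv.sumCongr σ τ) (Vx n ℓ) = ((Equiv.Perm.sign σ : ℤ) : M n ℓ) * Vx n ℓ := by
  rw [Vx, AlgHom.map_det, ← Matrix.det_permute]
  congr 1
  ext1 i j
  simp [Matrix.vandermonde_apply]

lemma rename_Vy (σ : Equiv.Perm (Fin n)) (τ : Equiv.Perm (Fin ℓ)) :
    rename (Equiv.sumCongr σ τ) (Vy n ℓ) = ((Equiv.Perm.sign τ : ℤ) : M n ℓ) * Vy n ℓ := by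
  rw [Vy, AlgHom.map_det, ← Matrix.det_permute]
  congr 1
  ext1 i j
  simp [Matrix.vandermonde_apply]

lemma rename_S (σ : Equiv.Perm (Fin n)) (τ : Equiv.Perm (Fin ℓ)) :
    rename (Equiv.sumCongr σ τ) (S n ℓ) = S n ℓ := by
  simp only [S, map_mul, map_prod, map_sub, rename_X, rename_C, Equiv.sumCongr_apply, Sum.map_inl,
    Sum.map_inr]
  rw [Equiv.prod_comp σ (fun i => (C Polynomial.X - X (Sum.inl i) : M n ℓ)),
    Equiv.prod_comp τ (fun i => (C Polynomial.X - X (Sum.inr i) : M n ℓ)),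
    Equiv.prod_comp σ (fun i => ∏ j, (X (Sum.inl i) - X (Sum.inr (τ j)) : M n ℓ))]
  congr 2
  refine Finset.prod_congr rfl fun i _ => ?_
  rw [Equiv.prod_comp τ (fun j => (X (Sum.inl i) - X (Sum.inr j) : M n ℓ))]

lemma symm_L :
    ((n.factorial * ℓ.factorial : ℕ) : Polynomial ℂ) * L c d n ℓ a b
      ((∏ j : Fin ℓ, X (Sum.inr j) ^ (j : ℕ)) * (∏ i : Fin n, X (Sum.inl i) ^ (i : ℕ)) *
        (Vx n ℓ * Vy n ℓ * S n ℓ)) =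
    L c d n ℓ a b (Vx n ℓ ^ 2 * Vy n ℓ ^ 2 * S n ℓ) := by
  have h : Vx n ℓ ^ 2 * Vy n ℓ ^ 2 * S n ℓ = ∑ τ : Equiv.Perm (Fin ℓ), ∑ σ : Equiv.Perm (Fin n),
      rename (Equiv.sumCongr σ τ) ((∏ j : Fin ℓ, X (Sum.inr j) ^ (j : ℕ)) *
        (∏ i : Fin n, X (Sum.inl i) ^ (i : ℕ)) * (Vx n ℓ * Vy n ℓ * S n ℓ)) := by
    have hx : Vx n ℓ = ∑ σ : Equiv.Perm (Fin n), ((Equiv.Perm.sign σ : ℤ) : M n ℓ) *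
        ∏ i : Fin n, X (Sum.inl (σ i)) ^ (i : ℕ) := by
      rw [Vx, Matrix.det_apply']
      simp [Matrix.vandermonde_apply]
    have hy : Vy n ℓ = ∑ σ : Equiv.Perm (Fin ℓ), ((Equiv.Perm.sign σ : ℤ) : M n ℓ) *
        ∏ i : Fin ℓ, X (Sum.inr (σ i)) ^ (i : ℕ) := by
      rw [Vy, Matrix.det_apply']
      simp [Matrix.vandermonde_apply]
    have h1 : Vx n ℓ ^ 2 * Vy n ℓ ^ 2 * S n ℓ =
        Vy n ℓ * Vx n ℓ * (Vx n ℓ * Vy n ℓ * S n ℓ) := by ring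
    rw [h1]
    conv_lhs =>
      enter [1]
      rw [hx, hy]
    rw [Finset.sum_mul_sum, Finset.sum_mul]
    refine Finset.sum_congr rfl fun τ _ => ?_
    rw [Finset.sum_mul]
    refine Finset.sum_congr rfl fun σ _ => ?_
    simp only [map_mul, rename_Vx, rename_Vy, rename_S, map_prod, map_pow, rename_X,
      Equiv.sumCongr_apply, Sum.map_inl, Sum.map_inr]
    ring
  rw [h]
  simp only [map_sum, L_rename]
  simp [Fintype.card_perm]
  ring

/-- the polynomial matrix nodes -/
noncomputable def node : Fin (ℓ + n + 1) → M n ℓ :=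
  Fin.snoc (α := fun _ => M n ℓ)
    (Fin.append (fun j => X (Sum.inr j)) (fun i => X (Sum.inl i))) (C Polynomial.X)

/-- column factors -/
noncomputable def fac : Fin (ℓ + n + 1) → M n ℓ :=
  Fin.snoc (α := fun _ => M n ℓ)
    (Fin.append (fun j => X (Sum.inr j) ^ (j : ℕ)) (fun i => X (Sum.inl i) ^ (i : ℕ))) 1

lemma det_node : (Matrix.vandermonde (node n ℓ)).det = Vx n ℓ * Vy n ℓ * S n ℓ := by
  have key : ∀ (N : ℕ) (v : Fin N → M n ℓ), (Matrix.vandermonde v).det =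
      ∏ i, ∏ j, if i < j then v j - v i else 1 := by
    intro N v
    rw [Matrix.det_vandermonde]
    refine Finset.prod_congr rfl fun i _ => ?_
    rw [← Finset.prod_filter]
    congr 1
    ext j; simp
  have h1 : ∀ (i : Fin ℓ) (j : Fin n), Fin.castAdd n i < Fin.natAdd ℓ j := by
    intro i j; rw [Fin.lt_def]; simp; omega
  have h2 : ∀ (i : Fin ℓ) (j : Fin n), ¬ Fin.natAdd ℓ j < Fin.castAdd n i := by
    intro i j; rw [Fin.lt_def]; simp; omega
  have h3 : ∀ (i j : Fin ℓ), Fin.castAdd n i < Fin.castAdd n j ↔ i < j := by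
    intro i j; rw [Fin.lt_def, Fin.lt_def]; simp
  have h4 : ∀ (i j : Fin n), Fin.natAdd ℓ i < Fin.natAdd ℓ j ↔ i < j := by
    intro i j; rw [Fin.lt_def, Fin.lt_def]; simp
  rw [Vx, Vy, key, key, key, Fin.prod_univ_castSucc, Fin.prod_univ_add]
  simp only [Fin.prod_univ_castSucc, Fin.prod_univ_add, node, Fin.snoc_castSucc, Fin.snoc_last,
    Fin.append_left, Fin.append_right, Fin.castSucc_lt_castSucc_iff, h1, h2, if_true, if_false,
    Fin.castSucc_lt_last, Finset.prod_mul_distrib, Finset.prod_const_one,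
    h3, h4, S,
    not_lt.mpr (Fin.le_last _), mul_one, one_mul]
  rw [Finset.prod_comm (s := (Finset.univ : Finset (Fin n))) (t := (Finset.univ : Finset (Fin ℓ)))]
  ring

lemma L_det (β : ℤ) (hab : a = b - β) :
    (Matrix.det (Matrix.of fun i j : Fin (ℓ + n + 1) =>
      if (j : ℕ) < ℓ then Polynomial.C (d (b + (i : ℕ) + (j : ℕ)))
      else if (j : ℕ) < ℓ + n then Polynomial.C (c (b - β + (i : ℕ) + (j : ℕ) - (ℓ : ℤ)))
      else Polynomial.X ^ (i : ℕ))) =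
    L c d n ℓ a b (Matrix.of fun i j : Fin (ℓ + n + 1) =>
      fac n ℓ j * (Matrix.vandermonde (node n ℓ)).transpose i j).det := by
  subst hab
  rw [Matrix.det_apply, Matrix.det_apply, map_sum]
  refine Finset.sum_congr rfl fun σ _ => ?_
  rw [Units.smul_def, Units.smul_def, map_zsmul]
  congr 1
  rw [Fin.prod_univ_castSucc, Fin.prod_univ_castSucc, Fin.prod_univ_add, Fin.prod_univ_add]
  simp only [Matrix.of_apply, Matrix.transpose_apply, Matrix.vandermonde_apply, node, fac,
    Fin.snoc_castSucc, Fin.snoc_last, Fin.append_left, Fin.append_right, one_mul, ← pow_add,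
    ← map_pow, L_prod]
  congr 1
  · congr 1
    · refine Finset.prod_congr rfl fun i _ => ?_
      simp
      congr 1; ring
    · refine Finset.prod_congr rfl fun i _ => ?_
      simp
      congr 1; ring
  · simp

lemma sq_prod (N : ℕ) (v : Fin N → M n ℓ) : (Matrix.vandermonde v).det ^ 2 =
    ∏ p ∈ (Finset.univ : Finset (Fin N × Fin N)).filter (fun p => p.1 < p.2),
      (v p.1 - v p.2) ^ 2 := by
  rw [Matrix.det_vandermonde, Finset.prod_filter, Fintype.prod_prod_type, ← Finset.prod_pow]
  refine Finset.prod_congr rfl fun i _ => ?_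
  rw [← Finset.prod_filter, ← Finset.prod_pow]
  refine Finset.prod_congr ?_ fun j _ => by ring
  ext j; simp

end P3Proof

theorem residue_formula_P3 (c d : ℤ → ℂ) (k ℓ : ℕ) (hℓk : ℓ ≤ k) (α β : ℤ) :
    Polynomial.C (((k - ℓ).factorial * ℓ.factorial : ℕ) : ℂ) * P3 c d k ℓ α β =
      (-1 : Polynomial ℂ) ^ (ℓ * (ℓ + 1) / 2) *
        ∑ m ∈ (pKernelShift k ℓ).support,
          (pKernelShift k ℓ).coeff m *
            Polynomial.C ((∏ i : Fin (k - ℓ), c (α - β + (m (Sum.inl i) : ℤ))) *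
              ∏ j : Fin ℓ, d (α + (m (Sum.inr j) : ℤ))) := by
  have hS : pKernelShift k ℓ =
      P3Proof.Vx (k - ℓ) ℓ ^ 2 * P3Proof.Vy (k - ℓ) ℓ ^ 2 * P3Proof.S (k - ℓ) ℓ := by
    rw [P3Proof.Vx, P3Proof.Vy, P3Proof.sq_prod, P3Proof.sq_prod, P3Proof.S, pKernelShift]
    ring
  have hR := P3Proof.L_eq_sum c d (k - ℓ) ℓ (α - β) α (pKernelShift k ℓ)
  simp only [P3Proof.wt] at hR
  rw [← hR, hS, ← P3Proof.symm_L, P3]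
  have hk : k = ℓ + (k - ℓ) := by omega
  clear hR hS
  generalize k - ℓ = n at *
  subst hk
  rw [P3Proof.L_det c d n ℓ (α - β) α β rfl, Matrix.det_mul_row, Matrix.det_transpose,
    P3Proof.det_node]
  rw [Fin.prod_univ_castSucc, Fin.prod_univ_add]
  simp only [P3Proof.fac, Fin.snoc_castSucc, Fin.snoc_last, Fin.append_left, Fin.append_right,
    mul_one]
  rw [map_natCast]
  ring
end

section
/- For all integers k, ℓ ≥ 0 and all α, β ∈ ℤ, the tau-functions satisfy equation (1) of the generalized Q-system: (τ_{k,ℓ}^{(α+1,β)})² = τ_{k,ℓ}^{(α,β)} τ_{k,ℓ}^{(α+2,β)} + τ_{k+1,ℓ+1}^{(α,β)} τ_{k−1,ℓ−1}^{(α+2,β)} − τ_{k+1,ℓ}^{(α,β)} τ_{k−1,ℓ}^{(α+2,β)}. -/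
/-- The `ĜL₃` tau-function (with `E(z) = 0`): for `k ≥ ℓ ≥ 0`, `(−1)^{ℓ(ℓ+1)/2}` times the
determinant of the `k × k` matrix whose `(i,j)` entry is `d_{α+i+j}` for `0 ≤ j ≤ ℓ-1` and
`c_{α−β+i+j−ℓ}` for `ℓ ≤ j ≤ k-1`; it is set to `0` whenever `k < ℓ`, `ℓ < 0`, or `k < 0`. -/
noncomputable def tau3Z (c d : ℤ → ℂ) (k ℓ α β : ℤ) : ℂ :=
  if k < ℓ ∨ ℓ < 0 ∨ k < 0 then 0
  else
    (-1 : ℂ) ^ (ℓ.toNat * (ℓ.toNat + 1) / 2) *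
      Matrix.det (Matrix.of fun i j : Fin k.toNat =>
        if ((j : ℕ) : ℤ) < ℓ then d (α + (i : ℕ) + (j : ℕ))
        else c (α - β + (i : ℕ) + (j : ℕ) - ℓ))

set_option linter.unusedSimpArgs false
open Matrix in
/-- Sylvester–Plücker exchange identity. -/
theorem gl3_plucker {n : Type*} [Fintype n] [DecidableEq n] (A B : Matrix n n ℂ) (q : n)
    (v : n → ℂ) :
    A.det * (B.updateCol q v).det =
      ∑ j, (A.updateCol j v).det * (B.updateCol q (fun i => A i j)).det := by
  have h := congrArg (cramer B) (mulVec_cramer A v)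
  have h2 : A *ᵥ cramer A v = ∑ j, (A.updateCol j v).det • (fun i => A i j) := by
    ext i
    simp [mulVec, dotProduct, cramer_apply, mul_comm]
  rw [h2, map_sum, map_smul] at h
  have h3 := congrFun h q
  simp only [Finset.sum_apply, map_smul, Pi.smul_apply, cramer_apply, smul_eq_mul] at h3
  exact h3.symm

theorem gl3_expand {n : ℕ} (A : Matrix (Fin (n + 1)) (Fin (n + 1)) ℂ) (p q : Fin (n + 1))
    (h : ∀ i, A i q = if i = p then 1 else 0) :
    A.det = (-1) ^ (p + q : ℕ) * (A.submatrix p.succAbove q.succAbove).det := by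
  rw [Matrix.det_succ_column A q, Finset.sum_eq_single p]
  · simp [h]
  · intro b _ hb
    simp [h, hb]
  · simp

/-- The mixed Hankel determinant. -/
noncomputable def gl3H (D C : ℕ → ℂ) (a n l : ℕ) : ℂ :=
  Matrix.det (Matrix.of fun i j : Fin n =>
    if (j : ℕ) < l then D (a + i + j) else C (a + i + (j - l)))

noncomputable def gl3V (D C : ℕ → ℂ) (n l : ℕ) : Matrix (Fin n) (Fin n) ℂ :=
  Matrix.of fun i j : Fin n => if (j : ℕ) < l then D (i + j) else C (i + (j - l))

noncomputable def gl3W (D C : ℕ → ℂ) (n l : ℕ) : Matrix (Fin n) (Fin n) ℂ :=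
  Matrix.of fun i j : Fin n => if (j : ℕ) ≤ l then D (i + j) else C (i + (j - l))

def gl3e {n : ℕ} (p : Fin n) : Fin n → ℂ := fun i => if i = p then 1 else 0

theorem gl3_congr (F : ℕ → ℂ) {a b : ℕ} (h : a = b) : F a = F b := by rw [h]

variable (D C : ℕ → ℂ)

theorem gl3_W00 (k l : ℕ) :
    ((gl3W D C (k+1) l).updateCol 0 (gl3e 0)).det = gl3H D C 2 k l := by
  rw [gl3_expand _ 0 0 (by intro i; simp [gl3e])]
  simp only [Fin.val_zero, add_zero, pow_zero, one_mul, gl3H]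
  congr 1
  ext i j
  simp [gl3W, Matrix.updateCol_apply, Fin.succ_ne_zero, Nat.succ_le_iff]
  split_ifs
  · congr 1; omega
  · congr 1; omega

theorem gl3_Wk0 (k l : ℕ) :
    ((gl3W D C (k+1) l).updateCol 0 (gl3e (Fin.last k))).det = (-1) ^ k * gl3H D C 1 k l := by
  rw [gl3_expand _ (Fin.last k) 0 (by intro i; simp [gl3e])]
  simp only [Fin.val_zero, add_zero, Fin.val_last, gl3H]
  congr 2
  ext i j
  simp [gl3W, Matrix.updateCol_apply, Fin.succ_ne_zero, Nat.succ_le_iff]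
  split_ifs
  · congr 1; omega
  · congr 1; omega

theorem gl3_V0k (k l : ℕ) :
    ((gl3V D C (k+1) l).updateCol (Fin.last k) (gl3e 0)).det = (-1) ^ k * gl3H D C 1 k l := by
  rw [gl3_expand _ 0 (Fin.last k) (by intro i; simp [gl3e])]
  simp only [Fin.val_zero, zero_add, Fin.val_last, gl3H]
  congr 2
  ext i j
  simp [gl3V, Matrix.updateCol_apply, Fin.castSucc_ne_last]
  split_ifs
  · congr 1; omega
  · congr 1; omega

theorem gl3_Vkk (k l : ℕ) :
    ((gl3V D C (k+1) l).updateCol (Fin.last k) (gl3e (Fin.last k))).det = gl3H D C 0 k l := by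
  rw [gl3_expand _ (Fin.last k) (Fin.last k) (by intro i; simp [gl3e])]
  simp only [Fin.val_last, gl3H, ← two_mul, pow_mul]
  simp only [neg_one_sq, one_pow, one_mul]
  congr 1
  ext i j
  simp [gl3V, Matrix.updateCol_apply, Fin.castSucc_ne_last]

theorem gl3_Vdet (n l : ℕ) : (gl3V D C n l).det = gl3H D C 0 n l := by
  simp [gl3V, gl3H]

/-- Both corner columns replaced. -/
theorem gl3_W0kk (k l : ℕ) :
    (((gl3W D C (k+2) l).updateCol 0 (gl3e 0)).updateCol (Fin.last (k+1))
      (gl3e (Fin.last (k+1)))).det = gl3H D C 2 k l := by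
  rw [gl3_expand _ (Fin.last (k+1)) (Fin.last (k+1)) (by intro i; simp [gl3e])]
  rw [gl3_expand _ 0 0 (by
    intro i
    have hne : (0 : Fin (k+2)) ≠ Fin.last (k+1) := by simp [Fin.ext_iff]
    rw [Matrix.submatrix_apply, Fin.succAbove_last, Fin.castSucc_zero, Matrix.updateCol_ne hne,
      Matrix.updateCol_self]
    simp [gl3e])]
  simp only [Fin.val_last, gl3H, ← two_mul, pow_mul]
  simp only [neg_one_sq, one_pow, one_mul, Fin.val_zero, mul_zero, pow_zero]
  congr 1
  ext i j
  have := i.2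
  have := j.2
  simp [gl3W, Matrix.updateCol_apply, Fin.ext_iff, Nat.succ_le_iff]
  rw [if_neg (by omega)]
  split_ifs
  · congr 1; omega
  · congr 1; omega

/-- Interior column replaced. -/
theorem gl3_W0kl (k l : ℕ) (hl : l ≤ k) :
    (((gl3W D C (k+2) (l+1)).updateCol 0 (gl3e 0)).updateCol ⟨l+1, by omega⟩
      (gl3e (Fin.last (k+1)))).det = (-1) ^ (k + l) * gl3H D C 2 k l := by
  rw [gl3_expand _ 0 0 (by
    intro i
    have hne : (0 : Fin (k+2)) ≠ ⟨l+1, by omega⟩ := by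
      rw [Ne, Fin.ext_iff, Fin.val_zero]; simp only; omega
    rw [Matrix.updateCol_ne hne, Matrix.updateCol_self]
    simp [gl3e])]
  rw [gl3_expand _ (Fin.last k) ⟨l, by omega⟩ (by
    intro i
    simp [gl3e, Matrix.updateCol_apply, Fin.ext_iff])]
  simp only [Fin.val_last, gl3H]
  simp only [one_mul, Fin.val_zero, add_zero, pow_zero]
  congr 2
  ext i j
  have := i.2
  have := j.2
  set p : Fin (k+1) := ⟨l, by omega⟩ with hp
  have h1 : (p.succAbove j).succ ≠ (⟨l+1, by omega⟩ : Fin (k+2)) := by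
    intro h
    apply Fin.succAbove_ne p j
    apply Fin.succ_injective
    rw [h]
    simp [hp]
  simp only [Matrix.submatrix_apply, Fin.succAbove_zero, Fin.succAbove_last]
  rw [Matrix.updateCol_ne h1, Matrix.updateCol_ne (Fin.succ_ne_zero _)]
  simp only [gl3W, Matrix.of_apply, Fin.val_succ, Fin.val_castSucc]
  rcases lt_or_ge (j : ℕ) l with h | h
  · rw [Fin.succAbove_of_castSucc_lt _ _ (by simpa [hp, Fin.lt_def] using h), Fin.val_castSucc,
      if_pos (by omega), if_pos h]
    apply gl3_congr; omega
  · rw [Fin.succAbove_of_le_castSucc _ _ (by simpa [hp, Fin.le_def] using h), Fin.val_succ,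
      if_neg (by omega), if_neg (by omega)]
    apply gl3_congr; omega

theorem gl3_Vl (k l : ℕ) (hl : l ≤ k) :
    ((gl3V D C (k+1) l).updateCol (Fin.last k) (fun i => D (i + l))).det
      = (-1) ^ (k + l) * gl3H D C 0 (k+1) (l+1) := by
  have hle : (⟨l, by omega⟩ : Fin (k+1)) ≤ Fin.last k := Fin.le_last _
  have key : (gl3V D C (k+1) l).updateCol (Fin.last k) (fun i => D (i + l)) =
      (gl3V D C (k+1) (l+1)).submatrix id (Fin.cycleIcc ⟨l, by omega⟩ (Fin.last k)) := by
    ext i j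
    rw [Matrix.submatrix_apply]
    have hj := j.2
    rcases lt_or_ge (j : ℕ) l with h | h
    · rw [Fin.cycleIcc_of_lt (by simpa [Fin.lt_def] using h)]
      have : j ≠ Fin.last k := by rw [Ne, Fin.ext_iff, Fin.val_last]; omega
      simp [gl3V, this, h]
      omega
    · rw [Fin.cycleIcc_of_le_of_le (by simpa [Fin.le_def] using h) (Fin.le_last _)]
      by_cases hjk : j = Fin.last k
      · simp [gl3V, Matrix.updateCol_apply, hjk]
      · have h1 : ((j + 1 : Fin (k+1)) : ℕ) = j + 1 := by
          apply Fin.val_add_one_of_lt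
          exact Fin.lt_last_iff_ne_last.mpr hjk
        simp [gl3V, Matrix.updateCol_apply, hjk, h1, h.not_gt]
  rw [key, Matrix.det_permute', Fin.sign_cycleIcc_of_le hle, gl3_Vdet]
  congr 1
  simp only [Fin.val_last]
  obtain ⟨m, rfl⟩ := Nat.exists_eq_add_of_le hl
  have : l + m + l = m + 2 * l := by ring
  rw [this, pow_add, pow_mul]
  simp

/-- The pure Hankel case. -/
theorem gl3_hankel (D C E : ℕ → ℂ) (K l : ℕ)
    (hE : ∀ (i j : ℕ), j ≤ K + 1 → E (i + j) = if j < l then D (i + j) else C (i + (j - l)))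
    (hE' : ∀ (i j : ℕ), j ≤ K + 1 → E (i + j) = if j ≤ l then D (i + j) else C (i + (j - l))) :
    gl3H D C 2 (K+1) l * gl3H D C 0 (K+1) l =
      gl3H D C 1 (K+1) l ^ 2 + gl3H D C 2 K l * gl3H D C 0 (K+2) l := by
  have hp := gl3_plucker ((gl3W D C (K+2) l).updateCol 0 (gl3e 0)) (gl3V D C (K+2) l)
    (Fin.last (K+1)) (gl3e (Fin.last (K+1)))
  have hVW : gl3W D C (K+2) l = gl3V D C (K+2) l := by
    ext i j
    have := j.2
    simp only [gl3W, gl3V, Matrix.of_apply]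
    rw [← hE _ _ (by omega), ← hE' _ _ (by omega)]
  have hne : (0 : Fin (K+2)) ≠ Fin.last (K+1) := by simp [Fin.ext_iff]
  rw [gl3_W00, gl3_Vkk, Fintype.sum_eq_add 0 (Fin.last (K+1)) hne] at hp
  · rw [hp]
    rw [gl3_W0kk]
    have e1 : (fun i => (gl3W D C (K+2) l).updateCol 0 (gl3e 0) i 0) = gl3e 0 := by
      ext i; simp
    have e2 : (fun i => (gl3W D C (K+2) l).updateCol 0 (gl3e 0) i (Fin.last (K+1))) =
        fun i => gl3V D C (K+2) l i (Fin.last (K+1)) := by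
      ext i; rw [Matrix.updateCol_ne hne.symm, hVW]
    rw [e1, e2, gl3_V0k]
    have e3 : (gl3V D C (K+2) l).updateCol (Fin.last (K+1))
        (fun i => gl3V D C (K+2) l i (Fin.last (K+1))) = gl3V D C (K+2) l :=
      Matrix.updateCol_eq_self _ _
    rw [e3, gl3_Vdet, Matrix.updateCol_idem, gl3_Wk0]
    have : ((-1 : ℂ) ^ (K+1)) * (-1) ^ (K+1) = 1 := by
      rw [← mul_pow]; simp
    linear_combination (gl3H D C 1 (K+1) l ^ 2) * this
  · rintro x ⟨hx0, hxk⟩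
    rw [mul_eq_zero]
    right
    apply Matrix.det_zero_of_column_eq hxk
    intro i
    rw [Matrix.updateCol_self, Matrix.updateCol_ne hxk, Matrix.updateCol_ne hx0, hVW]

theorem gl3_general (D C : ℕ → ℂ) (K L : ℕ) (hL : L + 1 ≤ K) :
    gl3H D C 2 (K+1) (L+1) * gl3H D C 0 (K+1) (L+1) =
      gl3H D C 1 (K+1) (L+1) ^ 2 + gl3H D C 2 K (L+1) * gl3H D C 0 (K+2) (L+1)
      + gl3H D C 2 K L * gl3H D C 0 (K+2) (L+2) := by
  have hp := gl3_plucker ((gl3W D C (K+2) (L+1)).updateCol 0 (gl3e 0)) (gl3V D C (K+2) (L+1))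
    (Fin.last (K+1)) (gl3e (Fin.last (K+1)))
  have hne : (0 : Fin (K+2)) ≠ Fin.last (K+1) := by simp [Fin.ext_iff]
  have hlt : L + 1 < K + 2 := by omega
  have hne1 : (⟨L+1, hlt⟩ : Fin (K+2)) ≠ Fin.last (K+1) := by
    rw [Ne, Fin.ext_iff, Fin.val_last]; simp only; omega
  have hne0 : (⟨L+1, hlt⟩ : Fin (K+2)) ≠ 0 := by
    rw [Ne, Fin.ext_iff, Fin.val_zero]; simp only; omega
  have hcol : ∀ (i x : Fin (K+2)), x ≠ ⟨L+1, hlt⟩ →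
      gl3W D C (K+2) (L+1) i x = gl3V D C (K+2) (L+1) i x := by
    intro i x hx
    have hx' : (x : ℕ) ≠ L + 1 := fun h => hx (Fin.ext h)
    simp only [gl3W, gl3V, Matrix.of_apply]
    have : ((x : ℕ) ≤ L + 1) ↔ ((x : ℕ) < L + 1) := by omega
    simp only [this]
  have hsum := Finset.sum_subset (Finset.subset_univ
    ({0, ⟨L+1, hlt⟩, Fin.last (K+1)} : Finset (Fin (K+2))))
    (f := fun j => (((gl3W D C (K+2) (L+1)).updateCol 0 (gl3e 0)).updateCol j
      (gl3e (Fin.last (K+1)))).det * ((gl3V D C (K+2) (L+1)).updateCol (Fin.last (K+1))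
      (fun i => (gl3W D C (K+2) (L+1)).updateCol 0 (gl3e 0) i j)).det) (by
    intro x _ hx
    simp only [Finset.mem_insert, Finset.mem_singleton, not_or] at hx
    obtain ⟨hx0, hxl, hxk⟩ := hx
    rw [mul_eq_zero]
    right
    apply Matrix.det_zero_of_column_eq hxk
    intro i
    rw [Matrix.updateCol_self, Matrix.updateCol_ne hxk, Matrix.updateCol_ne hx0, hcol _ _ hxl])
  rw [← hsum, gl3_W00, gl3_Vkk, Finset.sum_insert (by simp [hne, hne0.symm]),
    Finset.sum_insert (by simp [hne1]), Finset.sum_singleton] at hp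
  have e1 : (fun i => (gl3W D C (K+2) (L+1)).updateCol 0 (gl3e 0) i 0) = gl3e 0 := by
    ext i; simp
  have e2 : (fun i => (gl3W D C (K+2) (L+1)).updateCol 0 (gl3e 0) i (Fin.last (K+1))) =
      fun i => gl3V D C (K+2) (L+1) i (Fin.last (K+1)) := by
    ext i; rw [Matrix.updateCol_ne hne.symm, hcol _ _ hne1.symm]
  have e3 : (gl3V D C (K+2) (L+1)).updateCol (Fin.last (K+1))
      (fun i => gl3V D C (K+2) (L+1) i (Fin.last (K+1))) = gl3V D C (K+2) (L+1) :=
    Matrix.updateCol_eq_self _ _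
  have e4 : (fun i => (gl3W D C (K+2) (L+1)).updateCol 0 (gl3e 0) i ⟨L+1, hlt⟩) =
      fun i : Fin (K+2) => D (i + (L+1)) := by
    ext i; rw [Matrix.updateCol_ne hne0]; simp [gl3W]
  rw [e1, e2, e3, e4, gl3_V0k, gl3_Vdet, Matrix.updateCol_idem, gl3_Wk0, gl3_W0kk,
    gl3_W0kl _ _ _ _ (by omega), gl3_Vl _ _ _ _ (by omega)] at hp
  rw [hp]
  have s1 : ((-1 : ℂ) ^ (K+1)) * (-1) ^ (K+1) = 1 := by
    rw [← mul_pow]; simp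
  have s2 : ((-1 : ℂ) ^ (K+L)) * (-1) ^ (K+1+(L+1)) = 1 := by
    rw [show K+1+(L+1) = K+L+2 by ring, pow_add _ (K+L) 2, ← mul_assoc, ← mul_pow]; simp
  linear_combination (gl3H D C 1 (K+1) (L+1) ^ 2) * s1 +
    gl3H D C 2 K L * gl3H D C 0 (K+2) (L+2) * s2

theorem gl3_tau_eq (c d : ℤ → ℂ) (k l a : ℕ) (α β : ℤ) (h : l ≤ k) :
    tau3Z c d k l (α + a) β = (-1 : ℂ) ^ (l * (l + 1) / 2) *
      gl3H (fun n => d (α + n)) (fun n => c (α - β + n)) a k l := by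
  unfold tau3Z gl3H
  rw [if_neg (by omega)]
  simp only [Int.toNat_natCast, Nat.cast_lt]
  congr 2
  ext i j
  simp only [Matrix.of_apply]
  split_ifs with hj
  · congr 1; push_cast; ring
  · congr 1; rw [not_lt] at hj; push_cast [Nat.cast_sub hj]; ring

theorem gl3_tau_zero (c d : ℤ → ℂ) (k l α β : ℤ) (h : k < l ∨ l < 0 ∨ k < 0) :
    tau3Z c d k l α β = 0 := by
  unfold tau3Z
  rw [if_pos h]

theorem gl3_sign_sq (l : ℕ) : ((-1 : ℂ) ^ (l * (l + 1) / 2)) ^ 2 = 1 := by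
  rw [← pow_mul, mul_comm, pow_mul]; simp

theorem gl3_sign_prod (l : ℕ) :
    ((-1 : ℂ) ^ ((l + 2) * (l + 2 + 1) / 2)) * (-1 : ℂ) ^ (l * (l + 1) / 2) = -1 := by
  have h : (l + 2) * (l + 2 + 1) / 2 = l * (l + 1) / 2 + (2 * l + 3) := by
    rw [show (l + 2) * (l + 2 + 1) = l * (l + 1) + (2 * l + 3) * 2 by ring]
    rw [Nat.add_mul_div_right _ _ (by norm_num)]
  rw [h, pow_add, mul_right_comm, ← sq, gl3_sign_sq, pow_add, pow_mul]
  norm_num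

/-- For `l ≥ n` only the first sequence matters. -/
theorem gl3H_ge (D C : ℕ → ℂ) (a n l : ℕ) (h : n ≤ l) : gl3H D C a n l = gl3H D D a n 0 := by
  unfold gl3H
  congr 1
  ext i j
  have := j.2
  simp only [Matrix.of_apply]
  rw [if_pos (by omega), if_neg (by omega), Nat.sub_zero]

theorem gl3_hankel0 (D C : ℕ → ℂ) (K : ℕ) :
    gl3H D C 2 (K+1) 0 * gl3H D C 0 (K+1) 0 =
      gl3H D C 1 (K+1) 0 ^ 2 + gl3H D C 2 K 0 * gl3H D C 0 (K+2) 0 := by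
  have h0 : ∀ a n, gl3H D C a n 0 = gl3H C C a n 0 := by
    intro a n
    simp [gl3H]
  simp only [h0]
  apply gl3_hankel C C C
  · intro i j _; simp
  · intro i j _; simp

theorem gl3_Qsystem_eq1 (c d : ℤ → ℂ) (k ℓ : ℤ) (hk : 0 ≤ k) (hℓ : 0 ≤ ℓ) (α β : ℤ) :
    (tau3Z c d k ℓ (α + 1) β) ^ 2 =
      tau3Z c d k ℓ α β * tau3Z c d k ℓ (α + 2) β +
        tau3Z c d (k + 1) (ℓ + 1) α β * tau3Z c d (k - 1) (ℓ - 1) (α + 2) β -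
        tau3Z c d (k + 1) ℓ α β * tau3Z c d (k - 1) ℓ (α + 2) β := by
  rcases lt_or_ge k ℓ with hlt | hle
  · rw [gl3_tau_zero c d k ℓ _ _ (by omega), gl3_tau_zero c d k ℓ _ _ (by omega),
      gl3_tau_zero c d (k+1) (ℓ+1) _ _ (by omega), gl3_tau_zero c d (k-1) ℓ _ _ (by omega)]
    ring
  lift k to ℕ using hk
  lift ℓ to ℕ using hℓ
  have hle' : ℓ ≤ k := by exact_mod_cast hle
  have t0 := fun (k l : ℕ) => gl3_tau_eq c d k l 0 α β
  have t1 := fun (k l : ℕ) => gl3_tau_eq c d k l 1 α β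
  have t2 := fun (k l : ℕ) => gl3_tau_eq c d k l 2 α β
  simp only [Nat.cast_zero, Nat.cast_one, Nat.cast_ofNat, add_zero] at t0 t1 t2
  generalize (fun n : ℕ => d (α + n)) = D at t0 t1 t2
  generalize (fun n : ℕ => c (α - β + n)) = C at t0 t1 t2
  have t0' := t0 (k+1) ℓ (by omega)
  have t0'' := t0 (k+1) (ℓ+1) (by omega)
  push_cast at t0' t0''
  rw [t1 k ℓ hle', t0 k ℓ hle', t2 k ℓ hle', t0', t0'']
  have sq := gl3_sign_sq ℓ
  rcases k with _ | K
  · have : ℓ = 0 := by omega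
    subst this
    rw [gl3_tau_zero c d _ _ _ _ (by omega), gl3_tau_zero c d _ _ _ _ (by omega)]
    simp [gl3H]
  have eK : ((K + 1 : ℕ) : ℤ) - 1 = (K : ℕ) := by push_cast; ring
  rw [eK]
  rcases ℓ with _ | L
  · rw [gl3_tau_zero c d _ _ (α + 2) _ (by omega), t2 K 0 (by omega)]
    have := gl3_hankel0 D C K
    simp only [zero_mul, Nat.zero_div, pow_zero, one_mul]
    linear_combination -this
  have eL : ((L + 1 : ℕ) : ℤ) - 1 = (L : ℕ) := by push_cast; ring
  rw [eL, t2 K L (by omega)]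
  have sp := gl3_sign_prod L
  rcases Nat.lt_or_ge K (L+1) with h | h
  · have : K = L := by omega
    subst this
    rw [gl3_tau_zero c d _ _ (α + 2) _ (by omega)]
    have := gl3_hankel0 D D K
    simp only [gl3H_ge D C _ _ _ le_rfl]
    linear_combination (gl3H D D 1 (K+1) 0 ^ 2 - gl3H D D 2 (K+1) 0 * gl3H D D 0 (K+1) 0) * sq
      - this - gl3H D D 2 K 0 * gl3H D D 0 (K+2) 0 * sp
  · rw [t2 K (L+1) (by omega)]
    have := gl3_general D C K L h
    linear_combination (gl3H D C 1 (K+1) (L+1) ^ 2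
      - gl3H D C 2 (K+1) (L+1) * gl3H D C 0 (K+1) (L+1)
      + gl3H D C 2 K (L+1) * gl3H D C 0 (K+2) (L+1)) * sq
      - this - gl3H D C 2 K L * gl3H D C 0 (K+2) (L+2) * sp
end

section
/- For all integers k, ℓ ≥ 0 and all α, β ∈ ℤ, the tau-functions satisfy equation (2) of the generalized Q-system (a T-system relation): τ_{k,ℓ}^{(α+1,β)} τ_{k,ℓ−1}^{(α+2,β)} = τ_{k−1,ℓ−1}^{(α+2,β)} τ_{k+1,ℓ}^{(α+1,β)} + τ_{k,ℓ−1}^{(α+1,β)} τ_{k,ℓ}^{(α+2,β)}. -/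
open Matrix in
theorem aux_plucker {n : Type*} [Fintype n] [DecidableEq n] (A : Matrix n n ℂ) (r s : n)
    (hrs : r ≠ s) (u v : n → ℂ) :
    A.det * ((A.updateCol r u).updateCol s v).det =
      (A.updateCol r u).det * (A.updateCol s v).det -
        (A.updateCol r v).det * (A.updateCol s u).det := by
  set B := A.updateCol r u with hB
  set y := cramer A v with hy
  have hyr : y r = (A.updateCol r v).det := by rw [hy, cramer_apply]
  have hys : y s = (A.updateCol s v).det := by rw [hy, cramer_apply]
  have h1 : A.det • v = B *ᵥ y + y r • ((fun i => A i r) + (-1 : ℂ) • u) := by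
    rw [← mulVec_cramer, ← hy]
    ext i
    have : ∀ j, A i j * y j = B i j * y j + (if j = r then y r * (A i r - u i) else 0) := by
      intro j
      by_cases h : j = r
      · subst h; simp [hB]; ring
      · simp [hB, h, updateCol_ne]
    simp only [mulVec, dotProduct, Pi.add_apply, Pi.smul_apply, smul_eq_mul]
    rw [Finset.sum_congr rfl fun j _ => this j, Finset.sum_add_distrib]
    simp only [Finset.sum_ite_eq', Finset.mem_univ, if_true]
    ring
  have h2 : (B.updateCol s (B *ᵥ y)).det = y s * B.det := by
    rw [← cramer_apply, cramer_eq_adjugate_mulVec, mulVec_mulVec, adjugate_mul]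
    simp [smul_mulVec, mul_comm]
  have h3 : (B.updateCol s u).det = 0 := by
    apply det_zero_of_column_eq hrs
    intro i
    simp [hB, hrs]
  have h4 : (B.updateCol s (fun i => A i r)).det = -(A.updateCol s u).det := by
    rw [← det_permute' (Equiv.swap r s) (A.updateCol s u) |> fun h => show
      ((A.updateCol s u).submatrix id (Equiv.swap r s)).det = -(A.updateCol s u).det by
        rw [h]; simp [Equiv.Perm.sign_swap hrs]]
    congr 1
    ext i j
    by_cases hs : j = s
    · subst hs; simp [hrs]
    · by_cases hr : j = r
      · subst hr; simp [hB, hrs]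
      · simp [hB, hs, hr, Equiv.swap_apply_of_ne_of_ne hr hs]
  have h5 := det_updateCol_smul B s A.det v
  rw [← h5, h1, det_updateCol_add, det_updateCol_smul, det_updateCol_add, det_updateCol_smul,
    h2, h3, h4, hyr, hys]
  ring

open Matrix in
theorem aux_single {n : ℕ} (A : Matrix (Fin (n+1)) (Fin (n+1)) ℂ) (i j : Fin (n+1)) :
    (A.updateCol j (Pi.single i 1)).det =
      (-1) ^ ((i : ℕ) + j) * (A.submatrix i.succAbove j.succAbove).det := by
  rw [det_succ_column _ j, Finset.sum_eq_single i]
  · simp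
  · intro b _ hb
    simp [hb]
  · simp

open Matrix in
theorem aux_dj {n : ℕ} (M : Matrix (Fin (n+2)) (Fin (n+2)) ℂ) (r : Fin (n+1)) :
    (M.submatrix Fin.castSucc Fin.castSucc).det *
        (M.submatrix Fin.succ r.castSucc.succAbove).det =
      (M.submatrix (fun i : Fin n => i.succ.castSucc) (fun j => (r.succAbove j).castSucc)).det *
        M.det +
      (M.submatrix Fin.castSucc r.castSucc.succAbove).det *
        (M.submatrix Fin.succ Fin.castSucc).det := by
  have h := aux_plucker M r.castSucc (Fin.last _) (Fin.castSucc_lt_last r).ne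
    (Pi.single 0 1) (Pi.single (Fin.last _) 1)
  have h6 : (M.updateCol r.castSucc (Pi.single 0 1)).submatrix Fin.castSucc Fin.castSucc =
      (M.submatrix Fin.castSucc Fin.castSucc).updateCol r (Pi.single 0 1) := by
    ext i j
    by_cases hj : j = r
    · subst hj
      simp only [submatrix_apply, updateCol_self, Pi.single_apply]
      simp
    · simp [hj]
  have e1 := aux_single M 0 r.castSucc
  have e2 := aux_single M (Fin.last _) r.castSucc
  have e3 := aux_single M 0 (Fin.last _)
  have e4 := aux_single M (Fin.last _) (Fin.last _)
  have e5 := aux_single (M.updateCol r.castSucc (Pi.single 0 1)) (Fin.last _) (Fin.last _)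
  rw [e5, e1, e2, e3, e4] at h
  simp only [Fin.succAbove_last] at h
  rw [h6, aux_single] at h
  simp only [submatrix_submatrix, Fin.succAbove_zero, Fin.val_last, Fin.val_zero, Fin.val_castSucc,
    zero_add] at h
  have hs : ((-1 : ℂ) ^ (n+1)) * (-1) ^ (n+1) = 1 := by rw [← mul_pow]; simp
  have hr : ((-1 : ℂ) ^ (r:ℕ)) * (-1) ^ (r:ℕ) = 1 := by rw [← mul_pow]; simp
  simp only [pow_add (-1 : ℂ) (n+1), hs] at h
  set P : ℂ := (-1) ^ (n+1)
  set Q : ℂ := (-1) ^ (r:ℕ)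
  change _ = (M.submatrix (Fin.castSucc ∘ Fin.succ) (Fin.castSucc ∘ r.succAbove)).det * _ + _
  set x1 := (M.submatrix (Fin.castSucc ∘ Fin.succ) (Fin.castSucc ∘ r.succAbove)).det
  set x2 := (M.submatrix Fin.castSucc Fin.castSucc).det
  set x3 := (M.submatrix Fin.succ r.castSucc.succAbove).det
  set x4 := (M.submatrix Fin.castSucc r.castSucc.succAbove).det
  set x5 := (M.submatrix Fin.succ Fin.castSucc).det
  linear_combination (-Q) * h + (M.det * x1 - x3*x2 + x4*x5*P*P) * hr  + x4*x5*hs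

theorem gl3_Qsystem_eq2 (c d : ℤ → ℂ) (k ℓ : ℤ) (hk : 0 ≤ k) (hℓ : 0 ≤ ℓ) (α β : ℤ) :
    tau3Z c d k ℓ (α + 1) β * tau3Z c d k (ℓ - 1) (α + 2) β =
      tau3Z c d (k - 1) (ℓ - 1) (α + 2) β * tau3Z c d (k + 1) ℓ (α + 1) β +
        tau3Z c d k (ℓ - 1) (α + 1) β * tau3Z c d k ℓ (α + 2) β := by
  by_cases h0 : ℓ = 0
  · subst h0; simp [tau3Z]
  by_cases hlt : k < ℓ
  · simp [tau3Z, hlt]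
  obtain ⟨m, rfl⟩ : ∃ m : ℕ, ℓ = m + 1 := ⟨(ℓ - 1).toNat, by omega⟩
  obtain ⟨n, rfl⟩ : ∃ n : ℕ, k = n + 1 := ⟨(k - 1).toNat, by omega⟩
  have hmn : m ≤ n := by omega
  have h := aux_dj (Matrix.of fun i j : Fin (n+2) =>
        if ((j : ℕ) : ℤ) < (m:ℤ) + 1 then d (α + 1 + (i : ℕ) + (j : ℕ))
        else c (α + 1 - β + (i : ℕ) + (j : ℕ) - ((m:ℤ) + 1))) ⟨m, by omega⟩
  have t1 : ((n:ℤ) + 1).toNat = n + 1 := by omega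
  have t2 : ((n:ℤ) + 1 + 1).toNat = n + 2 := by omega
  have t3 : ((m:ℤ) + 1).toNat = m + 1 := by omega
  have t4 : ((n:ℤ) + 1 - 1) = n := by omega
  have t5 : ((m:ℤ) + 1 - 1) = m := by omega
  have key : ∀ (K L : ℕ) (a : ℤ) (_ : L ≤ K) (N : Matrix (Fin K) (Fin K) ℂ),
      (∀ i j, N i j = if ((j : ℕ) : ℤ) < L then d (a + (i : ℕ) + (j : ℕ))
        else c (a - β + (i : ℕ) + (j : ℕ) - L)) →
      tau3Z c d K L a β = (-1 : ℂ) ^ (L * (L + 1) / 2) * N.det := by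
    intro K L a hKL N hN
    have : ¬ ((K:ℤ) < L ∨ (L:ℤ) < 0 ∨ (K:ℤ) < 0) := by omega
    rw [tau3Z, if_neg this]
    have hN' : N = Matrix.of fun i j : Fin K => if ((j : ℕ) : ℤ) < L then d (a + (i : ℕ) + (j : ℕ))
        else c (a - β + (i : ℕ) + (j : ℕ) - L) := by
      ext i j; exact hN i j
    rw [hN']
    rfl
  set M := (Matrix.of fun i j : Fin (n+2) =>
        if ((j : ℕ) : ℤ) < (m:ℤ) + 1 then d (α + 1 + (i : ℕ) + (j : ℕ))
        else c (α + 1 - β + (i : ℕ) + (j : ℕ) - ((m:ℤ) + 1))) with hM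
  have hMa : ∀ i j, M i j = if ((j : ℕ) : ℤ) < (m:ℤ) + 1 then d (α + 1 + (i : ℕ) + (j : ℕ))
        else c (α + 1 - β + (i : ℕ) + (j : ℕ) - ((m:ℤ) + 1)) := fun _ _ => rfl
  have fin : ∀ (p q : ℤ) (P Q : Prop) [Decidable P] [Decidable Q] (p' q' : ℤ), (P ↔ Q) →
      (P → p = p') → (¬ P → q = q') →
      (if P then d p else c q) = (if Q then d p' else c q') := by
    intro p q P Q _ _ p' q' hPQ h1 h2
    by_cases hP : P
    · rw [if_pos hP, if_pos (hPQ.1 hP), h1 hP]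
    · rw [if_neg hP, if_neg (fun x => hP (hPQ.2 x)), h2 hP]
  have sA : ∀ {N : ℕ} (p : Fin (N+1)) (j : Fin N), ((p.succAbove j : Fin (N+1)) : ℕ) =
      if (j:ℕ) < p then (j:ℕ) else j + 1 := by
    intro N p j
    by_cases hj : (j:ℕ) < p
    · rw [if_pos hj, Fin.succAbove_of_castSucc_lt _ _ (by simpa [Fin.lt_def] using hj)]; rfl
    · rw [if_neg hj, Fin.succAbove_of_le_castSucc _ _ (by simpa [Fin.le_def] using hj)]; rfl
  have k1 := key (n+1) (m+1) (α+1) (by omega) (M.submatrix Fin.castSucc Fin.castSucc) (by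
    intro i j
    rw [Matrix.submatrix_apply, hMa]
    apply fin <;> simp)
  have k2 := key (n+1) m (α+2) (by omega) (M.submatrix Fin.succ (Fin.castSucc ⟨m, by omega⟩).succAbove) (by
    intro i j
    rw [Matrix.submatrix_apply, hMa, sA]
    apply fin <;> simp <;> split_ifs <;> push_cast <;> grind)
  have k3 := key n m (α+2) (by omega) (M.submatrix (fun i : Fin n => i.succ.castSucc) (fun j => (Fin.succAbove (⟨m, by omega⟩ : Fin (n+1)) j).castSucc)) (by
    intro i j
    rw [Matrix.submatrix_apply, hMa, Fin.val_castSucc, Fin.val_castSucc, sA]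
    apply fin <;> simp <;> split_ifs <;> push_cast <;> grind)
  have k4 := key (n+2) (m+1) (α+1) (by omega) M (by
    intro i j
    rw [hMa]
    apply fin <;> simp)
  have k5 := key (n+1) m (α+1) (by omega) (M.submatrix Fin.castSucc (Fin.castSucc ⟨m, by omega⟩).succAbove) (by
    intro i j
    rw [Matrix.submatrix_apply, hMa, sA]
    apply fin <;> simp <;> split_ifs <;> push_cast <;> grind)
  have k6 := key (n+1) (m+1) (α+2) (by omega) (M.submatrix Fin.succ Fin.castSucc) (by
    intro i j
    rw [Matrix.submatrix_apply, hMa]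
    apply fin <;> simp <;> grind)
  have t6 : (n:ℤ) + 1 + 1 = ((n + 2 : ℕ) : ℤ) := by push_cast; ring
  rw [t4, t5, t6]
  push_cast at k1 k2 k3 k4 k5 k6 ⊢
  rw [k1, k2, k3, k4, k5, k6]
  linear_combination ((-1 : ℂ) ^ ((m+1) * (m + 1 + 1) / 2)) * ((-1 : ℂ) ^ (m * (m + 1) / 2)) * h
end

section
/- For all integers k, ℓ ≥ 0 and all α, β ∈ ℤ, the tau-functions satisfy equation (3) of the generalized Q-system: (τ_{k,ℓ}^{(α,β+1)})² = τ_{k,ℓ}^{(α,β)} τ_{k,ℓ}^{(α,β+2)} − τ_{k,ℓ−1}^{(α,β+2)} τ_{k,ℓ+1}^{(α,β)} − τ_{k+1,ℓ}^{(α,β+2)} τ_{k−1,ℓ}^{(α,β)}. -/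
open Matrix in
/-- Matrix determinant in natural-number parameters. -/
noncomputable def TT (c d : ℤ → ℂ) (α : ℤ) (n L : ℕ) (g : ℤ) : ℂ :=
  Matrix.det (Matrix.of fun i j : Fin n =>
    if (j : ℕ) < L then d (α + (i : ℕ) + (j : ℕ)) else c (g + (i : ℕ) + (j : ℕ) - L))

theorem tau3Z_nat (c d : ℤ → ℂ) (n L : ℕ) (h : L ≤ n) (α β : ℤ) :
    tau3Z c d n L α β = (-1 : ℂ) ^ (L * (L + 1) / 2) * TT c d α n L (α - β) := by
  unfold tau3Z TT
  rw [if_neg (by omega)]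
  simp

theorem tau3Z_zero (c d : ℤ → ℂ) (k ℓ : ℤ) (α β : ℤ) (h : k < ℓ ∨ ℓ < 0 ∨ k < 0) :
    tau3Z c d k ℓ α β = 0 := by
  unfold tau3Z
  rw [if_pos h]

theorem det_col_single {n : ℕ} (A : Matrix (Fin (n+1)) (Fin (n+1)) ℂ) (j : Fin (n+1))
    (h : ∀ i, A i j = if i = Fin.last n then 1 else 0) :
    A.det = (-1) ^ (n + (j : ℕ)) * (A.submatrix Fin.castSucc j.succAbove).det := by
  rw [Matrix.det_succ_column A j, Finset.sum_eq_single (Fin.last n)]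
  · simp only [h, if_true, Fin.val_last, mul_one]
    congr 2
    ext a b
    simp
  · intro b _ hb
    simp [h, hb]
  · simp

theorem det_move_col {n : ℕ} (A B : Matrix (Fin (n+1)) (Fin (n+1)) ℂ) (p q : Fin (n+1))
    (h1 : ∀ i, A i p = B i q) (h2 : ∀ i j, A i (p.succAbove j) = B i (q.succAbove j)) :
    A.det = (-1) ^ ((p : ℕ) + (q : ℕ)) * B.det := by
  rw [Matrix.det_succ_column A p, Matrix.det_succ_column B q, Finset.mul_sum]
  refine Finset.sum_congr rfl fun i _ => ?_
  have : A.submatrix i.succAbove p.succAbove = B.submatrix i.succAbove q.succAbove := by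
    ext a b
    simp [h2]
  rw [this, h1]
  have e : ((-1 : ℂ)) ^ ((q : ℕ) + (q : ℕ)) = 1 := Even.neg_one_pow ⟨_, rfl⟩
  simp only [pow_add] at e ⊢
  linear_combination (-(-1 : ℂ) ^ (i : ℕ) * (-1) ^ (p : ℕ) * B i q
    * (B.submatrix i.succAbove q.succAbove).det) * e

theorem succAbove_val {n : ℕ} (p : Fin (n+1)) (j : Fin n) :
    ((p.succAbove j : Fin (n+1)) : ℕ) = if (j : ℕ) < p then (j : ℕ) else j + 1 := by
  unfold Fin.succAbove
  simp only [Fin.lt_def, Fin.val_castSucc]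
  split_ifs <;> simp

/-- Exchange relation. -/
theorem exchange {n m : ℕ} (A : Matrix (Fin n) (Fin n) ℂ) (b : Fin n → ℂ)
    (B : Matrix (Fin m) (Fin m) ℂ) (p : Fin m) (s : Fin m → Fin n) :
    A.det * (B.updateCol p (fun i => b (s i))).det =
      ∑ j, (A.updateCol j b).det * (B.updateCol p (fun i => A (s i) j)).det := by
  have h := Matrix.mulVec_cramer A b
  have h2 : (A.det • fun i => b (s i)) =
      ∑ j, (A.updateCol j b).det • (fun i => A (s i) j) := by
    ext i
    have := congrFun h (s i)
    simp only [Matrix.mulVec, dotProduct, Matrix.cramer_apply, Pi.smul_apply, smul_eq_mul] at this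
    simp only [Pi.smul_apply, smul_eq_mul, Finset.sum_apply]
    rw [← this]
    exact Finset.sum_congr rfl fun _ _ => mul_comm _ _
  have h3 : ∀ v, (B.updateCol p v).det = Matrix.cramer B v p := fun v =>
    (Matrix.cramer_apply _ _ _).symm
  simp only [h3 (fun i => b (s i)), fun j => h3 (fun i => A (s i) j)]
  have h4 := congrFun (congrArg (Matrix.cramer B) h2) p
  simpa only [map_smul, map_sum, Pi.smul_apply, Finset.sum_apply, smul_eq_mul] using h4

theorem core (c d : ℤ → ℂ) (α g : ℤ) (N L : ℕ) (hL : L ≤ N) :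
    TT c d α (N+2) L (g-2) * TT c d α N L g =
      (if 0 < L then TT c d α (N+1) (L-1) (g-2) * TT c d α (N+1) (L+1) g else 0)
      - TT c d α (N+1) L (g-1) ^ 2 + TT c d α (N+1) L g * TT c d α (N+1) L (g-2) := by
  set A : Matrix (Fin (N+2)) (Fin (N+2)) ℂ := Matrix.of fun i j =>
    if (j : ℕ) < L then d (α + (i : ℕ) + (j : ℕ)) else c (g - 2 + (i : ℕ) + (j : ℕ) - L) with hA
  set B : Matrix (Fin (N+1)) (Fin (N+1)) ℂ := Matrix.of fun i j =>
    if (j : ℕ) < L then d (α + (i : ℕ) + (j : ℕ))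
      else c (g + (i : ℕ) + (j : ℕ) - L - 1) with hB
  set p : Fin (N+1) := ⟨L, by omega⟩ with hp
  set b : Fin (N+2) → ℂ := fun i => if i = Fin.last (N+1) then 1 else 0 with hb
  have key := exchange A b B p Fin.succ
  have hAd : A.det = TT c d α (N+2) L (g-2) := rfl
  -- the value at the unit vector
  have hBb : (B.updateCol p (fun i => b i.succ)).det = (-1) ^ (N + L) * TT c d α N L g := by
    rw [det_col_single _ p]
    · congr 1
      unfold TT
      congr 1
      ext i j
      have hne : p.succAbove j ≠ p := Fin.succAbove_ne p j
      rw [Matrix.submatrix_apply, Matrix.updateCol_ne hne]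
      simp only [hB, Matrix.of_apply, succAbove_val, Fin.val_castSucc, hp]
      split_ifs <;> first | omega | rfl | (congr 1; push_cast; ring)
    · intro i
      simp only [Matrix.updateCol_self, hb, ← Fin.succ_last, Fin.succ_inj]
  -- the minors of A
  have hAj : ∀ j : Fin (N+2), (A.updateCol j b).det =
      (-1) ^ (N + 1 + (j : ℕ)) * (A.submatrix Fin.castSucc j.succAbove).det := by
    intro j
    rw [det_col_single _ j (by intro i; simp [hb])]
    congr 2
    ext i l
    have hne : j.succAbove l ≠ j := Fin.succAbove_ne j l
    simp only [Matrix.submatrix_apply, Matrix.updateCol_ne hne]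
  rw [hAd, hBb] at key
  set f : Fin (N+2) → ℂ := fun j =>
    (A.updateCol j b).det * (B.updateCol p (fun i => A i.succ j)).det with hf
  -- vanishing terms
  have hvan : ∀ j : Fin (N+2), (j : ℕ) + 1 ≠ L → (j : ℕ) ≠ L → (j : ℕ) ≠ N + 1 → f j = 0 := by
    intro j h1 h2 h3
    have hj := j.2
    simp only [hf]
    rw [mul_eq_zero]
    right
    by_cases h4 : (j : ℕ) < L
    · have hne : (⟨(j : ℕ) + 1, by omega⟩ : Fin (N+1)) ≠ p := by
        simp only [hp, ne_eq, Fin.mk.injEq]; omega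
      refine Matrix.det_zero_of_column_eq hne.symm fun i => ?_
      rw [Matrix.updateCol_self, Matrix.updateCol_ne hne]
      simp only [hA, hB, Matrix.of_apply, Fin.val_succ]
      rw [if_pos h4, if_pos (by omega)]
      congr 1; push_cast; ring
    · have hne : (⟨(j : ℕ), by omega⟩ : Fin (N+1)) ≠ p := by
        simp only [hp, ne_eq, Fin.mk.injEq]; omega
      refine Matrix.det_zero_of_column_eq hne.symm fun i => ?_
      rw [Matrix.updateCol_self, Matrix.updateCol_ne hne]
      simp only [hA, hB, Matrix.of_apply, Fin.val_succ]
      rw [if_neg h4, if_neg (by omega)]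
      congr 1; push_cast; ring
  have hfL : f ⟨L, by omega⟩ = (-1) ^ (N + 1 + L) * TT c d α (N+1) L (g-1) ^ 2 := by
    simp only [hf]
    rw [hAj, pow_two, mul_assoc]
    congr 2
    · unfold TT
      congr 1
      ext i j
      simp only [Matrix.submatrix_apply, hA, Matrix.of_apply, succAbove_val, Fin.val_castSucc]
      split_ifs <;> first | omega | rfl | (congr 1; push_cast; ring)
    · unfold TT
      congr 1
      ext i j
      simp only [Matrix.updateCol_apply, hA, hB, hp, Matrix.of_apply, Fin.val_succ, Fin.ext_iff]
      split_ifs <;> first | omega | rfl | (congr 1; push_cast; omega)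
  have hfq : ∀ h : 0 < L, f ⟨L - 1, by omega⟩ =
      (-1) ^ (N + L) * (TT c d α (N+1) (L-1) (g-2) * TT c d α (N+1) (L+1) g) := by
    intro h
    obtain ⟨M, rfl⟩ : ∃ M, L = M + 1 := ⟨L - 1, by omega⟩
    simp only [hf]
    rw [hAj, mul_assoc]
    congr 1
    · congr 1; simp only []; omega
    congr 1
    · unfold TT
      congr 1
      ext i j
      simp only [Matrix.submatrix_apply, hA, Matrix.of_apply, succAbove_val, Fin.val_castSucc]
      split_ifs <;> first | omega | rfl | (congr 1; push_cast; ring_nf; done) | (congr 1; omega)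
    · unfold TT
      congr 1
      ext i j
      simp only [Matrix.updateCol_apply, hA, hB, hp, Matrix.of_apply, Fin.val_succ, Fin.ext_iff]
      split_ifs <;> first | omega | rfl | (congr 1; push_cast; ring_nf; done) | (congr 1; omega)
  have hfl : f (Fin.last (N+1)) =
      (-1) ^ (N + L) * (TT c d α (N+1) L g * TT c d α (N+1) L (g-2)) := by
    simp only [hf]
    have e1 : (A.submatrix Fin.castSucc (Fin.last (N+1)).succAbove).det
        = TT c d α (N+1) L (g-2) := by
      unfold TT
      congr 1
      ext i j
      simp [hA]
    have e2 : (B.updateCol p (fun i => A i.succ (Fin.last (N+1)))).det =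
        (-1) ^ (L + N) * TT c d α (N+1) L g := by
      unfold TT
      rw [det_move_col _ (Matrix.of fun i j : Fin (N+1) =>
        if (j : ℕ) < L then d (α + (i : ℕ) + (j : ℕ)) else c (g + (i : ℕ) + (j : ℕ) - L))
        p (Fin.last N)]
      · simp [hp]
      · intro i
        simp only [Matrix.updateCol_self, hA, Matrix.of_apply, Fin.val_last, Fin.val_succ]
        rw [if_neg (by omega), if_neg (by omega)]
        congr 1; push_cast; ring
      · intro i j
        rw [Matrix.updateCol_ne (Fin.succAbove_ne p j)]
        have hj := j.2
        simp only [hB, Matrix.of_apply, succAbove_val, hp, Fin.val_last]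
        split_ifs <;> first | omega | rfl | (congr 1; push_cast; ring)
    rw [hAj, e1, e2]
    have e3 : ((-1 : ℂ)) ^ (N + 1 + ((Fin.last (N+1) : Fin (N+2)) : ℕ)) = 1 :=
      Even.neg_one_pow ⟨N + 1, by simp⟩
    rw [e3, add_comm L N]; ring
  have e0 : ((-1 : ℂ)) ^ (N + L) * (-1) ^ (N + L) = 1 := by
    rw [← pow_add]; exact Even.neg_one_pow ⟨_, rfl⟩
  have e1 : ((-1 : ℂ)) ^ (N + 1 + L) = - (-1) ^ (N + L) := by ring
  rw [e1] at hfL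
  have hsum : ∑ j, f j = (if h : 0 < L then f ⟨L - 1, by omega⟩ else 0) + f ⟨L, by omega⟩
      + f (Fin.last (N+1)) := by
    have hne : (⟨L, by omega⟩ : Fin (N+2)) ≠ Fin.last (N+1) := by
      simp only [ne_eq, Fin.ext_iff, Fin.val_last]; omega
    split_ifs with h
    · rw [← Finset.sum_subset (Finset.subset_univ
        ({⟨L - 1, by omega⟩, ⟨L, by omega⟩, Fin.last (N+1)} : Finset (Fin (N+2))))]
      · rw [Finset.sum_insert, Finset.sum_pair hne, add_assoc]
        simp only [Finset.mem_insert, Finset.mem_singleton, Fin.ext_iff, Fin.val_last]; omega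
      · intro j _ hj
        simp only [Finset.mem_insert, Finset.mem_singleton, Fin.ext_iff, Fin.val_last] at hj
        exact hvan j (by omega) (by omega) (by omega)
    · rw [← Finset.sum_subset (Finset.subset_univ
        ({⟨L, by omega⟩, Fin.last (N+1)} : Finset (Fin (N+2))))]
      · rw [Finset.sum_pair hne, zero_add]
      · intro j _ hj
        simp only [Finset.mem_insert, Finset.mem_singleton, Fin.ext_iff, Fin.val_last] at hj
        exact hvan j (by omega) (by omega) (by omega)
  rw [hsum, hfL, hfl] at key
  split_ifs at key ⊢ with h
  · rw [hfq h] at key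
    linear_combination ((-1) ^ (N + L)) * key + (-(TT c d α (N+2) L (g-2) * TT c d α N L g) +
      (TT c d α (N+1) (L-1) (g-2) * TT c d α (N+1) (L+1) g
      - TT c d α (N+1) L (g-1) ^ 2 + TT c d α (N+1) L g * TT c d α (N+1) L (g-2))) * e0
  · linear_combination ((-1) ^ (N + L)) * key + (-(TT c d α (N+2) L (g-2) * TT c d α N L g) +
      (0 - TT c d α (N+1) L (g-1) ^ 2 + TT c d α (N+1) L g * TT c d α (N+1) L (g-2))) * e0

theorem TT_full (c d : ℤ → ℂ) (α : ℤ) (n : ℕ) (g g' : ℤ) :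
    TT c d α n n g = TT c d α n n g' := by
  unfold TT
  congr 1
  ext i j
  simp

theorem gl3_Qsystem_eq3 (c d : ℤ → ℂ) (k ℓ : ℤ) (hk : 0 ≤ k) (hℓ : 0 ≤ ℓ) (α β : ℤ) :
    (tau3Z c d k ℓ α (β + 1)) ^ 2 =
      tau3Z c d k ℓ α β * tau3Z c d k ℓ α (β + 2) -
        tau3Z c d k (ℓ - 1) α (β + 2) * tau3Z c d k (ℓ + 1) α β -
        tau3Z c d (k + 1) ℓ α (β + 2) * tau3Z c d (k - 1) ℓ α β := by
  obtain ⟨n, rfl⟩ := Int.eq_ofNat_of_zero_le hk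
  obtain ⟨L, rfl⟩ := Int.eq_ofNat_of_zero_le hℓ
  rcases lt_trichotomy n L with h | h | h
  · rw [tau3Z_zero c d n L α (β+1) (by omega), tau3Z_zero c d n L α β (by omega),
      tau3Z_zero c d n (L+1) α β (by omega), tau3Z_zero c d (n-1) L α β (by omega)]
    ring
  · subst h
    rw [tau3Z_zero c d n (n+1) α β (by omega), tau3Z_zero c d (n-1) n α β (by omega),
      tau3Z_nat c d n n le_rfl, tau3Z_nat c d n n le_rfl, tau3Z_nat c d n n le_rfl,
      TT_full c d α n (α - (β+1)) 0, TT_full c d α n (α - (β+2)) 0, TT_full c d α n (α - β) 0]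
    ring
  · obtain ⟨N, rfl⟩ : ∃ N, n = N + 1 := ⟨n - 1, by omega⟩
    have hc := core c d α (α - β) N L (by omega)
    have a1 : ((N + 1 : ℕ) : ℤ) + 1 = ((N + 2 : ℕ) : ℤ) := by push_cast; ring
    have a2 : ((N + 1 : ℕ) : ℤ) - 1 = (N : ℤ) := by push_cast; ring
    have a3 : (L : ℤ) + 1 = ((L + 1 : ℕ) : ℤ) := by push_cast; ring
    rw [a1, a2, a3, tau3Z_nat c d (N+1) L (by omega), tau3Z_nat c d (N+1) L (by omega),
      tau3Z_nat c d (N+1) L (by omega), tau3Z_nat c d (N+1) (L+1) (by omega),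
      tau3Z_nat c d (N+2) L (by omega), tau3Z_nat c d N L (by omega)]
    have b1 : α - (β + 1) = α - β - 1 := by ring
    have b2 : α - (β + 2) = α - β - 2 := by ring
    rw [b1, b2]
    have e0 : ((-1 : ℂ) ^ (L * (L + 1) / 2)) ^ 2 = 1 := by
      rw [← pow_mul]; exact Even.neg_one_pow ⟨_, mul_two _⟩
    rcases Nat.eq_zero_or_pos L with h0 | h0
    · subst h0
      rw [tau3Z_zero c d _ _ α (β+2) (by right; left; simp)]
      simp only [lt_irrefl, if_false] at hc
      simp only [zero_mul, Nat.zero_div, pow_zero, one_mul]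
      linear_combination hc
    · obtain ⟨M, rfl⟩ : ∃ M, L = M + 1 := ⟨L - 1, by omega⟩
      have a4 : ((M + 1 : ℕ) : ℤ) - 1 = (M : ℤ) := by push_cast; ring
      rw [a4, tau3Z_nat c d (N+1) M (by omega), b2]
      rw [if_pos h0, Nat.add_sub_cancel] at hc
      have e1 : (-1 : ℂ) ^ (M * (M + 1) / 2) * (-1) ^ ((M + 1 + 1) * (M + 1 + 1 + 1) / 2) = -1 := by
        rw [← pow_add]
        apply Odd.neg_one_pow
        obtain ⟨r, hr⟩ : ∃ r, M * (M + 1) = 2 * r := by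
          obtain ⟨r, hr⟩ := Nat.even_mul_succ_self M
          exact ⟨r, by omega⟩
        have h2 : (M + 1 + 1) * (M + 1 + 1 + 1) = 2 * (r + 2 * M + 3) := by
          linear_combination hr
        rw [hr, h2, Nat.mul_div_cancel_left _ two_pos, Nat.mul_div_cancel_left _ two_pos]
        exact ⟨r + M + 1, by ring⟩
      set s := (-1 : ℂ) ^ ((M + 1) * (M + 1 + 1) / 2)
      linear_combination hc + (TT c d α (N+1) (M+1) (α-β-1) ^ 2
        - TT c d α (N+1) (M+1) (α-β) * TT c d α (N+1) (M+1) (α-β-2)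
        + TT c d α (N+2) (M+1) (α-β-2) * TT c d α N (M+1) (α-β)) * e0
        + TT c d α (N+1) M (α-β-2) * TT c d α (N+1) (M+1+1) (α-β) * e1
end
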